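/- arXiv:1703.05253 — 3 statements merged into one kernel-verified Lean document; each statement's English description precedes it below -/
import Mathlib

section
/- Let C = A ∪ B be an ℓ-critical set with no ℓ-divided 5-hole in C and with |A| ≥ 6, with ℓ vertical, A to the left of ℓ, and all points of C having distinct x-coordinates. Then w_i ≤ 3 for every i with 1 < i < t. Moreover, if exactly two points of A lie on the boundary of the convex hull of C, then also w_1 ≤ 3 and w_t ≤ 3. -/
noncomputable section

/-- Points of the plane. -/
abbrev Pt : Type := ℝ × ℝ

/-- The cross product (signed area) of two planar vectors. -/
def cross2 (u v : Pt) : ℝ := u.1 * v.2 - u.2 * v.1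

/-- The dot product of two planar vectors. -/
def dotp (v p : Pt) : ℝ := v.1 * p.1 + v.2 * p.2

/-- A set of points in the plane is in general position if no three of its points
are collinear. -/
def GenPos (P : Set Pt) : Prop :=
  ∀ p ∈ P, ∀ q ∈ P, ∀ r ∈ P, p ≠ q → p ≠ r → q ≠ r →
    ¬ Collinear ℝ ({p, q, r} : Set Pt)

/-- A set of points is in convex position if no point of the set lies in the convex
hull of the other points. -/
def ConvexPos (S : Set Pt) : Prop :=
  ∀ p ∈ S, p ∉ convexHull ℝ (S \ {p})

/-- `H` is a `k`-hole in `P`: a subset of `P` of size `k` in convex position whose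
convex hull contains no point of `P \ H`. -/
def IsKHole (k : ℕ) (P H : Finset Pt) : Prop :=
  H ⊆ P ∧ H.card = k ∧ ConvexPos (↑H : Set Pt) ∧
    ∀ p ∈ P, p ∉ H → p ∉ convexHull ℝ (↑H : Set Pt)

/-- The number of `k`-holes in `P`. -/
def numKHoles (k : ℕ) (P : Finset Pt) : ℕ :=
  Set.ncard {H : Finset Pt | IsKHole k P H}

/-- For an `ℓ`-divided set `P = A ∪ B`, an `ℓ`-divided 5-hole is a 5-hole in `A ∪ B`
containing points of both `A` and `B`. -/
def DividedFiveHole (A B H : Finset Pt) : Prop :=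
  IsKHole 5 (A ∪ B) H ∧ (↑H ∩ ↑A : Set Pt).Nonempty ∧ (↑H ∩ ↑B : Set Pt).Nonempty

/-- `x` is an extremal point of `P`: it lies on the boundary of the convex hull of `P`. -/
def OnHullBoundary (P : Finset Pt) (x : Pt) : Prop :=
  x ∈ frontier (convexHull ℝ (↑P : Set Pt))

/-- An `ℓ`-divided set `C = A ∪ B` is `ℓ`-critical if neither part is in convex position
and, for every extremal point `x` of `C`, one of the sets `(C \ {x}) ∩ A` and
`(C \ {x}) ∩ B` is in convex position. -/
def LCritical (A B : Finset Pt) : Prop :=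
  ¬ ConvexPos (↑A : Set Pt) ∧ ¬ ConvexPos (↑B : Set Pt) ∧
    ∀ x ∈ A ∪ B, OnHullBoundary (A ∪ B) x →
      (ConvexPos (↑(A.erase x) : Set Pt) ∨ ConvexPos (↑(B.erase x) : Set Pt))

/-- The closed wedge with apex `a` swept clockwise from the ray `a→p` to the ray `a→q`.
If the clockwise angle from `a→p` to `a→q` is at most `π` the wedge is convex, otherwise
it is the corresponding reflex region. -/
def Wedge (a p q : Pt) : Set Pt :=
  if cross2 (p - a) (q - a) ≤ 0 then
    {x | cross2 (p - a) (x - a) ≤ 0 ∧ 0 ≤ cross2 (q - a) (x - a)}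
  else
    {x | cross2 (p - a) (x - a) ≤ 0 ∨ 0 ≤ cross2 (q - a) (x - a)}

/-- `W` is an `a`-wedge of `A`: one of the closed regions into which the rays from `a`
through the other points of `A` partition the plane, i.e. a wedge spanned by two
points of `A \ {a}` that are angularly consecutive around `a` (no other point of `A`
lies in the wedge). -/
def IsAWedge (A : Finset Pt) (a : Pt) (W : Set Pt) : Prop :=
  ∃ p ∈ A.erase a, ∃ q ∈ A.erase a, p ≠ q ∧ W = Wedge a p q ∧
    (↑A : Set Pt) ∩ Wedge a p q ⊆ {a, p, q}

/-- The combinatorial data of the `a*`-wedges of an `ℓ`-divided set `P = A ∪ B`, where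
`ℓ` is the vertical line `x = x0` and `A` lies to its left: `aStar` is the rightmost
interior point `a*` of `A`; `lbl` is the clockwise cyclic labeling `a_0, a_1, …` of
`A \ {a*}` (period `|A| - 1`), so that the `k`-th wedge `W_k` is swept clockwise from
the ray through `lbl (k-1)` to the ray through `lbl k` and contains no other point
of `A`; the wedges `W_1, …, W_t` are exactly those meeting `ℓ`, in top-to-bottom
order along `ℓ`. -/
structure StarSetup (x0 : ℝ) (A : Finset Pt) where
  aStar : Pt
  lbl : ℕ → Pt
  t : ℕ
  aStar_mem : aStar ∈ A
  aStar_interior : aStar ∈ interior (convexHull ℝ (↑A : Set Pt))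
  aStar_rightmost : ∀ p ∈ A, p ∈ interior (convexHull ℝ (↑A : Set Pt)) → p.1 ≤ aStar.1
  lbl_mem : ∀ k, lbl k ∈ A.erase aStar
  lbl_periodic : ∀ k, lbl (k + (A.card - 1)) = lbl k
  lbl_bij : ∀ p ∈ A.erase aStar, ∃! k, k ∈ Finset.Icc 1 (A.card - 1) ∧ lbl k = p
  consec : ∀ k ∈ Finset.Icc 1 (A.card - 1),
    (↑A : Set Pt) ∩ Wedge aStar (lbl (k - 1)) (lbl k) ⊆ {aStar, lbl (k - 1), lbl k}
  t_pos : 1 ≤ t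
  t_le : t ≤ A.card - 1
  inter_iff : ∀ k ∈ Finset.Icc 1 (A.card - 1),
    ((Wedge aStar (lbl (k - 1)) (lbl k)) ∩ {p : Pt | p.1 = x0}).Nonempty ↔ k ≤ t
  ordered : ∀ k ∈ Finset.Icc 1 t, ∀ k' ∈ Finset.Icc 1 t, k < k' →
    ∀ p ∈ (Wedge aStar (lbl (k - 1)) (lbl k)) ∩ {q : Pt | q.1 = x0},
    ∀ p' ∈ (Wedge aStar (lbl (k' - 1)) (lbl k')) ∩ {q : Pt | q.1 = x0},
      p'.2 ≤ p.2

/-- The `k`-th `a*`-wedge `W_k`. -/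
def StarSetup.W {x0 : ℝ} {A : Finset Pt} (S : StarSetup x0 A) (k : ℕ) : Set Pt :=
  Wedge S.aStar (S.lbl (k - 1)) (S.lbl k)

/-- `w_k`, the number of points of `B` in the `k`-th `a*`-wedge. -/
def StarSetup.w {x0 : ℝ} {A : Finset Pt} (S : StarSetup x0 A) (B : Finset Pt) (k : ℕ) : ℕ :=
  Set.ncard ((↑B : Set Pt) ∩ S.W k)

/-! ### Orientation and a verified search checker -/

/-- Orientation determinant of three points. -/
def ori (a b c : Pt) : ℝ := (b.1 - a.1) * (c.2 - a.2) - (b.2 - a.2) * (c.1 - a.1)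

/-- Test whether the mask `K` records that the triple `(a,b,c)` is positively oriented. -/
def kbit (K a b c : ℕ) : Bool :=
  Nat.beq (Nat.land (Nat.shiftRight K (Nat.add (Nat.mul 100 a) (Nat.add (Nat.mul 10 b) c))) 1) 1

/-- Record in the mask that the triple `(a,b,c)` is positively oriented. -/
def kadd (K a b c : ℕ) : ℕ :=
  Nat.lor K (Nat.lor (Nat.pow 2 (Nat.add (Nat.mul 100 a) (Nat.add (Nat.mul 10 b) c)))
    (Nat.lor (Nat.pow 2 (Nat.add (Nat.mul 100 b) (Nat.add (Nat.mul 10 c) a)))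
      (Nat.pow 2 (Nat.add (Nat.mul 100 c) (Nat.add (Nat.mul 10 a) b)))))

/-- First form of a violated Grassmann–Plücker relation. -/
def kg1 (K a b c d e : ℕ) : Bool :=
  kbit K a b c && (kbit K a b d && (kbit K a b e && (kbit K a d e && (kbit K a e c && kbit K a c d))))

/-- Second form of a violated Grassmann–Plücker relation. -/
def kg2 (K a b c d e : ℕ) : Bool :=
  kbit K a c b && (kbit K a d b && (kbit K a e b && (kbit K a e d && (kbit K a c e && kbit K a d c))))

/-- The point `x` is a vertex of the pentagon or is known to be outside of it. -/
def kout (K a b c d e x : ℕ) : Bool :=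
  kbit K b a x || (kbit K c b x || (kbit K d c x || (kbit K e d x || (kbit K a e x ||
    (Nat.beq x a || (Nat.beq x b || (Nat.beq x c || (Nat.beq x d || Nat.beq x e))))))))

/-- All points with index below `n` pass `kout`. -/
def koutAll (K a b c d e : ℕ) : ℕ → Bool
  | 0 => true
  | n + 1 => kout K a b c d e n && koutAll K a b c d e n

/-- The pentagon `a b c d e` is known to be a divided hole. -/
def khole (N K a b c d e : ℕ) : Bool :=
  (kbit K a b c && (kbit K a b d && (kbit K a b e && (kbit K a c d && (kbit K a c e &&
    (kbit K a d e && (kbit K b c d && (kbit K b c e && (kbit K b d e && kbit K c d e))))))))) &&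
  ((Nat.ble a 4 || (Nat.ble b 4 || (Nat.ble c 4 || (Nat.ble d 4 || Nat.ble e 4)))) &&
  ((Nat.ble 5 a || (Nat.ble 5 b || (Nat.ble 5 c || (Nat.ble 5 d || Nat.ble 5 e)))) &&
   koutAll K a b c d e N))

/-- The point `b` is known to lie in the pentagon `0 1 2 3 4`. -/
def kins (K b : ℕ) : Bool :=
  Nat.ble 5 b && (kbit K 1 2 b && (kbit K 2 3 b && kbit K 3 4 b))

/-- One step of the checker, acting on the top `K` of the stack. -/
def kact (N K : ℕ) (st : List ℕ) (g a b c d e : ℕ) : List ℕ :=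
  bif Nat.beq g 0 then
    (bif Nat.beq a b || (Nat.beq a c || Nat.beq b c) then K :: st
      else kadd K a b c :: kadd K a c b :: st)
  else bif (bif Nat.beq g 1 then kg1 K a b c d e else bif Nat.beq g 2 then kg2 K a b c d e
    else bif Nat.beq g 3 then khole N K a b c d e else bif Nat.beq g 4 then kins K a else false)
  then st else K :: st

/-- Decode one token (six base-`N` digits) and act. -/
def kstep (N c : ℕ) : List ℕ → List ℕ
  | [] => []
  | K :: st => kact N K st (Nat.mod c N) (Nat.mod (Nat.div c N) N)
      (Nat.mod (Nat.div c (Nat.pow N 2)) N) (Nat.mod (Nat.div c (Nat.pow N 3)) N)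
      (Nat.mod (Nat.div c (Nat.pow N 4)) N) (Nat.mod (Nat.div c (Nat.pow N 5)) N)

/-- Handle the tokens of one chunk. -/
def ksteps (N : ℕ) : ℕ → ℕ → List ℕ → List ℕ
  | 0, _, st => st
  | n + 1, c, st => ksteps N n (Nat.div c (Nat.pow N 6)) (kstep N c st)

/-- Handle all chunks; succeed when the stack of open cases is empty. -/
def krun (N : ℕ) : List ℕ → List ℕ → Bool
  | _, [] => true
  | [], _ :: _ => false
  | c :: cs, K :: st => krun N cs (ksteps N 10 c (K :: st))

/-- Record a list of positively oriented triples. -/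
def kaddAll (K : ℕ) : List (ℕ × ℕ × ℕ) → ℕ
  | [] => K
  | (a, b, c) :: l => kaddAll (kadd K a b c) l

/-- The positively oriented triples assumed at the start; `M` describes the wedge. -/
def kbase : List (ℕ × ℕ × ℕ) :=
  [(0,1,2),(0,1,3),(0,1,4),(0,2,3),(0,2,4),(0,3,4),(1,2,3),(1,2,4),(1,3,4),(2,3,4)]

/-- Extra triples: points `5,6,7,8` in the cone, sorted around point `1`. -/
def kfour : List (ℕ × ℕ × ℕ) :=
  [(0,1,5),(0,1,6),(0,1,7),(0,1,8),(0,5,4),(0,6,4),(0,7,4),(0,8,4),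
   (1,5,6),(1,5,7),(1,5,8),(1,6,7),(1,6,8),(1,7,8)]

/-- Extra triples for point `9`. -/
def kfive : List (ℕ × ℕ × ℕ) := [(0,1,9),(0,9,4),(1,5,9),(1,6,9),(1,7,9),(1,8,9)]

/-- All of `5,6,7,8` in the wedge `3 4`. -/
def kw0 : List (ℕ × ℕ × ℕ) := [(0,3,5),(0,3,6),(0,3,7),(0,3,8)]
/-- All of `5,6,7,8` in the wedge `2 3`. -/
def kw1 : List (ℕ × ℕ × ℕ) :=
  [(0,2,5),(0,2,6),(0,2,7),(0,2,8),(0,5,3),(0,6,3),(0,7,3),(0,8,3)]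
/-- All of `5,6,7,8` in the wedge `1 2`. -/
def kw2 : List (ℕ × ℕ × ℕ) := [(0,5,2),(0,6,2),(0,7,2),(0,8,2)]

def certW0 : List ℕ := [
  1642906412549937541341144417891988453815418679451306981198,
  15672785591434447348139481824359937033162285667649572843,
  1686549286560858889444799930079167998195085987852363988255,
  21637560926889506409451639556557450749803332844479635530,
  1582680066045644495191002944729957644136653407231439827408,
  11292390139264776892445310023419686003560531855746345674,
  21454972582950410109647424213103143186081469900928009373,
  1179329918211336316481891283680628774811912481678680036212,
  15368455680820907118723103150718360910584555745816962390,
  782551905793115282705893964936032668023159414430722122233,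
  20298529213714100437456849918102265640699791228875127660,
  18746473646772070436119865913137199740932372256185171635,
  16281433788020693154680268077762384207079908952805945161,
  794330968344604643648685928140142437523406518350112710168,
  19446421658334963169971106027037111672524603215284671995,
  969591958194670613809260911763974955449460528929756328159,
  21759297678419825985059967682191789544325412269558114559,
  1467495078795698802018946037191948863294710456168620306764,
  19537719297272111692103811398481424489041215895393724695,
  967127246574218220020362743401974533772656626366190816585,
  19537723477548580580200895323635995143859970128844118770,
  1444699029538208784901640662050942181069610806779483162165,
  6603870323651788773488998659580609614900848283081208205,
  570833087795120791683047871035551980650720380740372012240,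
  994243482751950243748296454122281421191906240562174266803,
  1151031059599569943617636906902732033576955100534894768247,
  1590048586193542070562225070068985511768960774894344600256,
  514042418152627793047808022468770756061244297888142593674,
  21728860283725971149216453343205956756453678409463397144,
  514831518524652039701566051926290319249278581631333087361,
  952338206006687733849203355584166563096411240590118814551,
  14090286903331138075584764067565924253433588409032809730,
  994243482751950243748296399183341014409693760861702737481,
  1494245269538990434249327029304596228397068102788133943734,
  1489529370181745250809261318216036546955822933265755077390,
  782521471033680585982301872499708812198442505892651715864,
  16906991381100700082917919515934113409673843174945994]

def certW1 : List ℕ := [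
  12081729856395583531772835160672225303337038574077947477,
  882769434686865548084191296147993993612056464771322725377,
  198545770138571814009592565093623705889162260482609590,
  20298529217531268276605264438772927852610005664781950417,
  12903431856054506522271722919758599705265598910154096925,
  311394994411766270891784723620372534260556075468783616693,
  791560217411776610116895864827197743349715308317654596919,
  1581221677891512073505132779494305375720356003513951030756,
  18959504773174140423529018984012167366451157676819779322,
  16798791847293273686462567301785567651275158135870345885,
  11320931850865720905479866555318053089768962164180954765,
  1587610453956971700175992488571908818196892944891787203901,
  21793011221861032922772095890656675122151342903274103212,
  774580284534484650786811607387583195546605720081099666274,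
  21637563732833678170393606222838510480225296692970662735,
  794300601399230292015105314762077841454173357115272221041,
  21820157693606336054032537249354798550884314927379511097,
  1464694873929026570007838124713671566277439941380346952845,
  21820153685116878645300554168911888605584274824856009051,
  1022933376404479730207341959633080682689421678045891781008,
  1693032301889910202446741801974338512763525577802358696890,
  1137515236188495962422631367209940643249272716525375763229,
  1644275053687310770062977215460727179591255931155473607144,
  16906991381100700082917919515934113349874638976824936]

def certW2 : List ℕ := [
  781454445046233467892224534066860055082076257053561237778,
  9342802921825514568165596681497625405053005341326056445,
  11564376950898641313981903931022019405789206101313629704,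
  1642177477946231648695480196944841051106617611843986425523,
  21089781163307855829289745293133245830189924228567873612,
  16768359434624366969768277565044867789973622307903568869,
  14333751931311238569067171235238949991781141931948238937,
  1383012900716537743987346386041882312042130665660846999519,
  1741906651079788023943844995779108535755601327551552645165,
  513736240851736491382904179846592859464000279457873014487,
  16798790873820180377506670250658594588164054630175251077,
  1669325319491876883865240575153195040162566284525738937165,
  660916657462067267094091070196374888157576997389695372048,
  1664242172936435225597402140054227910958555173650478373243,
  16906991381100700082917936928384593762962810553712014]

def certC : List ℕ := [
  493012000094921031920431009300003920009310009430009210009410,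
  7210009310008310007310004810004610004710004510492012931041,
  9840009200009300004920921431000094009320009430009210008210,
  710491497103009700009740009830009820004830940182498103009800,
  9500009750009850005210009540005930005310009630009730004730,
  841592573191150392495103495103653892843692008960009640006950,
  2610009760009860008640009640009600493103493103493103352712,
  961481741692496103496103562912632892932103009320002510009620,
  310491940122893141841292931481793041931471160392641392896141,
  9210008210003610003510783012893012372012782012392012932141,
  498103810491008900009840008310009310009300004920004930009320,
  3820008430009200004920000094932041940232321491493103493103,
  438103290832341292439103003910003900009430008930003800003810,
  8310009300004930009310008200004820000084821431810431438103,
  3820003810341292130292493103493103498103810491008900009840,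
  3700008730007430008740009740007420920431439103003900009430,
  832172784022492713427103009720002700008720003720002710009730,
  9530005320792141782141372842371481340172941732437103437103,
  6430008640006320006420005620005420002500002510005430003500,
  425103425103463522682141362842000064426103610421006200002610,
  6420002610006430006320592131150232492531000054230152342152,
  5620002510002500005420641232000064461321426103610421006200,
  351621643821426103008620002610002600009620009600009640006420,
  9620006420453022530122425103425103692041940162643921420961,
  7430007320643921643821694122684022426103002600002610008620,
  2710003700009730009700009740007430741232342172000074007210,
  8920009830009800009840009620008520008620002510002610009720,
  398213382103893402291582862191498303008960008950009300008300,
  9850008540008900008300008930009300009820009870940182498103,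
  840262362081983262008630008600006200006900008640008960006930,
  6900008640008960006930952481489303489303489303361091692101,
  489303489303361091692101840262362081983262008630008600006200,
  461821351821361921841792872191392103398213480931382091489303,
  8630006430793041710491942732430971437103932172672312572012,
  9600002510008620009620002610007630008600009640008640003600,
  8650005600002500002600006520009520007620008520009630007600,
  5630006850006950436203960521265103582062250682680152008500,
  8940008900008930008300008720009300009820009720002600006750,
  8740008970007930952481985623489303009870009850008540009860,
  398213382091498213961481489303489303489303943272984272007940,
  785623009870007930008740007850007860008730007210007520382103,
  8720392103875922581722731282281672281572743682397213983172,
  685191498303008950008970009840009300009800008960009830008300,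
  9700007960897621382103921381932682180692983601963481872191,
  7850007860008700007820009870008950007950009740007520007210,
  795623795623170282960871681572740682821371785623008730008740,
  583262351761436203762191961071691722975422741692752191795623,
  842162562312610491730162362491351821732162351921251961251861,
  7540005430842632340162683241693041830162742632436103461921,
  6500006540007500008500009530009540007530008540003500006530,
  8740007200006200006520009520002500007520008520002510008530,
  9630008640007630008630008760009700009740009730008730008700,
  796432461871976141487633487633497633009870009760009640007640,
  9640009760006730009870009300008300007300631782783162643782,
  973201487303497303497303497303794162361071740162006700007640,
  7960610371470631376203376103006720003600007600007630873201,
  9800009840006720009620008620002610009720008720002710007650,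
  843562461981896723008960006840008650006830008970008920009830,
  8960009300009820009870940182498103398213398713386723632582,
  986723387203398213796481930481489303008900006840008930008300,
  372103842172932172672312461821610921276513841792872191392103,
  2610007630009630009760009750009720009870710491361971751361,
  742592397523397523361971397613397613361921397623009620007620,
  961871008760007960007940008940009870009820008930984172392471,
  8750710481843172987531921381971381382491943172487933487933,
  9300008300008950008920008970009830009800009840008620008720,
  893402498303498303631582951861865191009650008650009860006830,
  8930009720009820009850940182498103471981398213932582382103,
  983262008630008600008640008960006930008300009300008900009620,
  398213896422982103392103590832489303489303489303840262362081,
  8600008760006720006750006850007210006210951481291582897022,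
  9740009720008920009800009840008960009870009750008640008630,
  821461687523687523687523961481940182690282291572741892872491,
  851471752181610821672012652181786252786422681572160582631582,
  471821927103160572275103007650009720008720006700002710009700,
  2710009720002700006720007650002610009620972402751021762501,
  460921651021265103265103265103976422961721470821275103008720,
  510471463152640152351481435213351821742152435203932152642052,
  7210006210573241642532520431583141351471593041351491840152,
  8760008730008700008740008530008500008540005200007200006200,
  943182691782987613009860008940008930009870009760007630008630,
  9830009800008300009700009730631782783162387613387613387613,
  843792498303861971786191007960009860009840009740008970009300,
  9860008640008930008940009850009870390182280932398713984172,
  3700006540003900006740961481489303973201397103003700003900,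
  372103975031352103009530003500007530005720005210006530007620,
  398713874162489303685141973201641272351461372103372103372103,
  873201387103387103397103003900009870003700971081951081940182,
  743152953871007530007540008750007950008900008940007940009870,
  9850009820008930980172710491987241987101487903487903784152,
  382491943172487933487933897152008750007950007940008940009870,
  8720007500007530007540710481843172987131921381951381971381,
  8300007300006300009300005300006530006500009500009530008750,
  2510009520005940009650009750009820008940009850006540008650,
  489303489303965381843562006830008640008960008900008930008520,
  485303921481897352896152495303920451395213510821398523853091,
  9860009630007640008760008640008630008600006750684152485303,
  479303470891009700008900007930008930008970009760007940008940,
  641572486303486303486303897241961471987613398613473891390182,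
  2510490531150632470531250832786052160582631582641582675181,
  8950008920008970009830009800009840008620006520008520007520,
  498303631582951861865191009650008650009860006830009300008300,
  9820009850940182498103471981398213932582382103893402498303,
  8600008640008960006930008300009300008900009620008930009720,
  982103392103590832489303489303489303840262362081983262008630,
  8600008760006720006750006850951481291582897022398213896422,
  9740009720008920009800009840008960009870009750008640008630,
  821461687523687523687523961481940182690282291572741892872491,
  352103451721482751510621652181786252786422681572160582631582,
  675131695131620351362103006520009630007630003600003500008630,
  6850009630008760006950006750009600008600685131360152351061,
  9850008940009860008300009300006300006520008640007630008630,
  160932683402486303486303951481985603489303398613009830008900,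
  670152690152681572631592860751631582631572641582150262362103,
  7940008940009300007300008300005300009850008900865402695201,
  7600007640006940008640006850009650006900006300007900005940,
  476903469303489303398613009830009630008760008630009860009760,
  485903485903485903485903541692786241740162961071961481631582,
  980152930152250832753101150932940182897241940152975101362103,
  6850006930009720008940005940009850009820007930008930985201,
  895402290532853201489303008300005300008900005900009300009860,
  921381983152351491382491921371485933485933691582392103351091,
  8520510481843152785141351471510471821471741582985231975231,
  7950005740008740009740008730009870009830008950009800009840,
  498733498733897162987613009760009860008760006730009730007850,
  9300008300371981741892473981875241451971951871943172498733,
  3700008730008700008740490831498303498303361981009860006830,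
  7860008600003600008630006820008720710481843172783402387103,
  382103382103382103830162386103386103793082672081008700008730,
  9700005740009740009520009820005940940182451981498103821471,
  7620008900008930007520007950009870008700008730008740009730,
  392871291672372103270932497303009300007300007960007820007920,
  8640009860009630009640009600005640007600007640006520397213,
  361471362103673402160932497303009300007300006300007630008630,
  765422641272740162765141976201796542943162180692876141693481,
  710491497103897241371481840172841792451971541272398713987103,
  7630007640009860008640005640009630006950009640009720975341,
  541262362103160932496303009300006300006520009760009600008630,
  541692361491965341896141961481796241361471361481610491741692,
  7930007620007520007850008700005740009870008740009300009620,
  691582654982008950008960006850008640008760007960008900007900,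
  7640006520397213740392987201487903487903487903765181897162,
  6300009860008630007630006750008640009760008600005640007600,
  796432390672476903007900007930006900006930007300006820007860,
  451761361471361481876191362103987613720861673402396213390162,
  710481541782541272765422641272740162765141876201721961876941,
  786922396213006720006520009630006820009830008720984172875941,
  489303489303961481008640008960008900008300398213398213865022,
  541282895041841292541292921471641292392103821471480931382091,
  8760007620006500008500008520006520007520009500002510003500,
  8730006740007960006730009730281672786422876213008620008720,
  497303009740009700007920009870008700008740009300008300007300,
  8900009820008930008720006840840372487303397213392071743292,
  270832270932786241743282387213831292390282940282489303008940,
  7800007300008970006300007840008300009830008720006830372103,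
  967833930461469303006900006930008530006940007940009300008960,
  372481180632371981180732380272786191478303478303741692351081,
  9620009720007940376213361971361471731682731282897131382103,
  6900007900009870007650006700006730006740006940006930007960,
  8700007850007530008730007300008740009300007820009820008940,
  793101483671170532832572170582763402469303487303008300006300,
  762103752061467933972103170692741892872191987213392103642872,
  7600007640943172921371796322976213732692362491961471643972,
  9860008940008930009870009760008630008730008760006750007630,
  9740007840008720631782387613387613387613943182691782987613,
  943172497833497833851971009750007850009730009830009840008970,
  3800008600003600003700008700009760009720894172897241493781,
  983761362103008630009630006920009860009820003900008900009870,
  470631876201180732876103876103893501291782691782392103392103,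
  6830009300007300008530008300008620008970009830008750830471,
  498303843292008940008960009800008650008950008920006800006300,
  873402478303386213280632380262398213932582570862180592976581,
  9870008940009820007930371981687523652181008650382103570382,
  921471691272270582897131921381382491478933987213987613009860,
  8740008600006820008700006850007850007820008640731282372481,
  876422840162740682821371678523678523791582008970009850008730,
  652402641272740162361471271562874162681272281572876252170282,
  672912630122740122352402530122592101450721450621450821852402,
  8300008720009300009820009720008620009620008520009520002510,
  8640008960006930009850008540009870008730008940008900008930,
  489303361091692101840262362081983262008630008600006200006900,
  8630008600006200006900008640008960006930952481489303489303,
  7930971381489303489303489303361091692101840262362081983262,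
  6830006300008530008750008500008540007800007200007300007840,
  478303478303361081468303675181650481008650008640006800007860,
  8600006200006900008640008960006930510481270582352481478303,
  380272489303489303489303361091692101840262362081983262008630,
  7210007520382103398213382091498213897131372481190732732101,
  8300007300007930007200008740008700007850007860008730007620,
  731282281672281572170282743282470821397213372103270832487303,
  8720008950008970009800009840009830392103875922581722876922,
  872191291582987422862191382103893402498303009300008300008960,
  7950009730007520007210009700007620007960921381843292921081,
  7860007820009300008300007300008730008700008740009740007200,
  372103270832270932387213762181497303487303281572008750008970,
  9830008950008960009800008920009840008720008970710481843172,
  782491921081786191291582498103382103893402498303009300008300,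
  170292691722975422921371752191740122743292894172942872897241,
  210481893412321481562812351921451821461921461821762191976422,
  3800008320003810002610002710002510892012493122930122832041,
  940232439103932811000094009210009310009430003900009320002800,
  2700003700008730007420007430007320180232230182328103328103,
  932811932713009210007930009310009430003900009320007920008720,
  782131170232710421831722327103327103327103432713439103437103,
  6420006430003900009320006920003600002600006320741232342172,
  510291009520005900009420008920009860002900002910008620009430,
  461321432613831622000094190622982162621892940622432903432903,
  6520006530007520005320610321362402326103326103326103641232,
  8520008530005430003900009320005920003500005420002500007530,
  435103439103932513009310005930009210009200009500009430009420,
  325103325103541232582131831522425103932041432503432903251091,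
  2800008420731522562131631522372152510321451321150232325103,
  6920003900002900003910002910009320008930009430009420008920,
  2900002910000094821392910421910431631922531922432903005920,
  2700007420810421428103428103932041932182381921380921429103,
  6920003900003910002900002910009320009430009420007920008720,
  94190722932611910431631922831922531922432903005920008920,
  473022841722427103427103932041493022493122429103002910002900,
  9320009760009430009860009420006920002600008620007620006420,
  621792531922432903005920007920008920003900003910002900002910,
  493022493122429103002910002900000094190622932611910431621892,
  6520005420643721643821463022426103426103982162932041972162,
  3910002900002910009320009430009420005920007520008520002500,
  94910421932611910431631922831922432903008920006920003900,
  841522741522425103425103932041351921493022429103002900002910,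
  6920003900003910002900002910009320009430009420641522453022,
  94910421932611910431631922831922531922432903005920008920,
  492103009210009200009320932141493022493122429103002910002900,
  930122130292493103009300009200004930009210009310490321491321,
  9300009720004930009620009200009520009820009210392412341292,
  8720007620009600009500009630009530009830009800009730009700,
  6850007850251761765121276513007520006520007650007860008620,
  4830008300008950006950007950008960007960008970008730008630,
  5600006540009540005740007840006940007940006840005840008940,
  951481963481841792896041973481951471578943695041950461640152,
  370621387203007200008200006200003700008700008600894032498303,
  793082783402720162276103872601387203008200007200007600160822,
  5830008960731682398723861971793682851971851961685191693082,
  751861893262631582851361693152685191956833008950006950005630,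
  397823851971009750007850008970008760007830786922287613681572,
  7860008720007650006730007960006740271381861271371981397823,
  8970008750008520007530007520006530006520009650009750008960,
  9870675391251961693252792152973651397523397523397523287513,
  731682007830008620008630008950371981951871398723007850008730,
  2800003800008430006520008520008620008650008730832762386723,
  6840894032438203160822360721793082287103008700002700002600,
  2700006700008200006200007850007520008700003700003800009840,
  2700002500160822720461387203670521562072275103007500002500,
  2800007200007850005730287513150622570622270951275103007500,
  498303980731710381563272685372865723865723980521950721002500,
  362481843592843692574891984272678943007840007940006940005940,
  953681851361693152956833006950005630005830396823962581572861,
  5730005620005630007950006950396723396723396723785391967833,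
  8620008730008630008950005830006850008960007860008720005720,
  396723396723396723356723356723685391956833956733832762386723,
  6700261471792162693272751961675391593762592762631572675121,
  8650008960006840006300006500006740006800007960006940006200,
  7520008720007860008200008520008620006530007650009650006520,
  4830008300007950008970006830008730008530006730006720007850,
  3700008700894032498303841792973481678943007840007940008940,
  851971793082680731387203670521562072275103007500002500002700,
  276513372961865131352981965833008950006830731582386723398723,
  765131251871365723865723006830007850006730005730006720287513,
  8750008760007820006830685922160822286513286513675422251371,
  951061751061351061382961396823396823765181631782876513007830,
  940262260792896402740162965402693101840162160892851061251061,
  5740005940007950005200004530005300005800008950796402692101,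
  5630006430006820006200003800008430008200008520008720005700,
  894032438203438203438203542632620431436203786422007620003600,
  8960007960008970008730261871287613786422006820007620008760,
  8650005720002700007850005830008700005730003700003800009840,
  854262005640005620008620007650006720006840006200006800006830,
  5630963581960581682101840162160722751861396823865723642152,
  6700007620002600003600009600008600008630008620006950005600,
  956833620381896402683902386203372861386723006730276103610271,
  510371710381510381985372387203532072863152360152963051621582,
  764152006540006750006840007840007940006740006940498303980731,
  398723861971786191843692974162574891984272961481678943678943,
  6540009650006750007850008960006840008970007960006730006830,
  371981361481786191967833967833967833796451851461876152008650,
  8630008960006950008650006820005830150822731682873162361971,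
  7860008970007830593282395823395823395823951861396823832162,
  974152790451271381371981397823397823987162791682009860009760,
  6940006200006900150892980152930152520431592101250792940152,
  5940005300361091692101940262693041693101469303006300004630,
  469303006940006200006900004630009650006930006300005900004530,
  351491942532352091459303459303459303941632361091692101940262,
  8720008730004830008700009870008940008300008200382091190532,
  7620009630009760006750006520009530007530007520009500009750,
  352971352091397523397523397523397523621572632572397623007630,
  8540008950008930007620009860008620008600007850250792792152,
  6750008930007960007860398723489303489303952481842152005820,
  792162398723986723986723986723896152751961009650009850008650,
  842152005820008540008950008930006840007860261081961081261871,
  810431371081271981951871160782840162398723489303489303952481,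
  4730007940007300007200372091982402983402940182280792897101,
  7860008620008720007620009760007530009530007520009750009500,
  371981007830009730009830008300004830009860008900008940009870,
  287613861971741892270892876191893041893101489303483791398723,
  479303397823832792008930009730008970008750008760007830786922,
  6940006740006300006700006900792162271381861271851271892572,
  9860008930008300006930007930004830008940009870008900004630,
  467903467903940182893041397523630791893101731892469303489303,
  270592792152352091793152270692961071693101610471796241610431,
  5640005600007620007630009760009630007600009600005940005200,
  6850004830009870007850008730008700007860008620008720006750,
  851471567843005740006840006740005840007840009860008900008940,
  861971742832751861741892270892876191487903741582860471974682,
  8970007840007800008760007830786922287613862071380172681572,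
  851271479303397823832792008930009730008750009750007520007500,
  397823832792008930009730008750007520009750005740562071970152,
  271381861271380672710481982071740652457903950272542872479303,
  6940006200976402361091270692361071261071695402510461510761,
  7800008970008960006840006800009830008950009800006300004630,
  9750009760007620006750008750008760008650006520009650007840,
  396523286513397623006820008520006530009530009630007630009730,
  675982876513751261875961675092479303361971796032853792693152,
  780461960872467903467903751461006540006750007960006700006740,
  7620009730005740006750009760005600005640251961851961874162,
  397823851971009750007850007830007820008620009630008760007630,
  456903479303792162361971861971796032397623287613382471397823,
  896402840162160892270892987101984172964152960152456903456903,
  9850009870007520009750007500004830008940008300150892382091,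
  6740007840008730008700007850007860008620007620008720008520,
  380272487903862471786341489303483791398723009730009830006840,
  6840007960007850006700006740007860786922287613987523852071,
  467903852071380272489303483791398723009730009830008730008700,
  7800007840785492251981271981261871261471261071987523792162,
  270152984172980172851971478903478903861471007640007860008750,
  691782008960008760007960008700007850009870008740005740970152,
  7620009760007640005840984172451871710481487903487903897162,
  8970007830007820009730009630009830008620008760009860007600,
  483691479303287613743282371981397823397823851971009750007850,
  9730009830006840974162261471740162476903476903982761489303,
  961871261971009760008760006720007850009870008720008730008700,
  7620008720008730009870830471271381980172854072398723398723,
  398723850272008750005720007860398723398723850272008750005720,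
  510471785941786241489303479303478903970382743282261871398723,
  793241592101940152692101940262693041693101983402940182810431,
  381921351921930122461921492103371921392103972402793201710491,
  7820008760008650006520007650009520009620009720007520007620,
  3900009430009200672152276513276513276513876513581672007850,
  6850007860007960009870920431439203439203281391009830008920,
  8930008200009850009860008920008620008520008720007850007950,
  3700009700009730003900008300008730008740004830008940008900,
  7940720391170932397203370621276103610271006700002600002700,
  7940372481480931389203003900489303784392487933973842007430,
  742682785141654972751461567843005640006740005840006840005740,
  298713821692695281380921932182290182281491941832894172851471,
  9860009820297613961871751861297513675181892172785322872162,
  8620008520008720298513251981005820009850298613892162006820,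
  9830009840009700009740006950007950006850007960007850007860,
  430981490831498303009300004830008300008200007200009730009800,
  4730372481710481783402387203003700008700008730008740004830,
  170822438203783041497833170832830272387203008700003700008730,
  710491841792382491280792372491370621276103610271006700002600,
  578943567943009840006940005640006740005940005840005740007840,
  751861851971851961984172851471785141795041654972751461796241,
  9830007840008750008760007830785922786922287613682572297613,
  7900007800007300008520008620009760009750007940004730007930,
  398203160822672082286103008600002600002800009800003800003900,
  2600002800003800009800003900830471390872479303790831810391,
  976823975823190732810391180732398203160822692082286103008600,
  952371873592951471457933005740005930005730004530005940986572,
  7940008940007930004730004830397823942732943172742592593041,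
  271381861271851271842172942832783041897131382491842792478933,
  180792298103009800002800009820008970009700002700002600821792,
  9750007940796422795422490621670922710291297103297103297103,
  8760002900003900009600003700007600002700009700007930009760,
  378923008930008920008750007830002800007820003800009800008970,
  976103976103976103983101982672892402271381851271298103932082,
  8940008720009870008740290172610971320172160792190732271091,
  984172842972987241482791731892387923487923007830008930008920,
  982672876513007820007830008750008970008760008650009650007650,
  9860008920008940009870951761976513976513976513765181983172,
  6850005640007850005740008720008620006840006740007860008930,
  567833003800006830005630008430005830005730006730007830005840,
  751861785241387923861371632572785231567843567843731682340182,
  876191731892987613986471974682872162462781964572682572751461,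
  9430007430007600007830008760007800008750007820741892482791,
  794831479303004930009830009300007300004830008300793041437923,
  920431479303190732003700004930009300340182873402478303478303,
  9830004930009620009520007530007630007300007200009200009820,
  2500008500008950002800008520796282298613008620009860009800,
  780521285103285103285103950681286103008600002600008620006850,
  6820006830008650002800008950005830005840398203298513572082,
  9650005640005740006740004530005940005930004630006940006930,
  942532476933475933764152963852756933005630251961965823006520,
  6950005620005640963581362581396823362491942632395823351491,
  351491956823610281380621286103002600008600008620005940005930,
  4830820391842152832152351981398203864152682451251961395823,
  6920005930932162376923006930439203940832874392478933008940,
  5740005300005700392751375923375923376923932162009630009650,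
  2800972402379203362071352071573101351471742532457303004530,
  7200006740005600932182378923008930390821872092298103009800,
  3900003800005730004530005630006730003700005640005700005740,
  190732379203378203437203564731456733004630004730002800002900,
  610271964572450671751461456703456703456703456703590371873402,
  951271961271932172892471851271980172681572832172751061740162,
  8730008630008530005740005640006750005630005730005620942172,
  9870006950008930009850007950009720008520007850008720006850,
  8200005700005200007200008940008920009860007860007960009620,
  150932439203005930003900009430008300005300004830009200008900,
  753092397203009700003700005900009730009630005930003900984032,
  3900005930003700250832489303150932856933732692953201590731,
  573101357203357203856933732692930272397203009700009730009630,
  276103610271006700002600170522720451170822290182890721489203,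
  385723976152785191796422297613961871796381298713281491370621,
  8540685131785231683152271381783152832152385723385723385723,
  9850007950009720005430008430008740007850008720008520006850,
  438923008920008930009620009430003900009870005930003500008940,
  485723485723340152893752785191290532940532796422531892298713,
  9530684152842652875422782652785141352481853041485723485723,
  9720006950007950009620009630008950009520009820009730009830,
  5200007200008960007960007860006850008970008620007850008720,
  8730004930004530005800005300004830009300008300008200009200,
  841792973481578943007840007940008940009800009700008630005940,
  654972467903796241009640006740006700007940006900280792498303,
  280532380152520431340292957833458303956833270692710491961071,
  3700008700008730008630004930004530009800004830180932340182,
  170822438203930182583141542932956833731682793082783402387203,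
  287613297613786191370621276103610271006700002600170522390521,
  695131261391792152692152392571395723395723876121298713876152,
  9520009430009800009840009540895231795231932182251391893152,
  340192439203180922298103002800002900003900009820009620009720,
  5600005200005300895041940182351491453292795121695121281491,
  9870009200006950007950009620009720005700004530005800005900,
  8940008900008930008200008920008720007850006850007860007960,
  932182290182281491489203458303190832389203003900003800004830,
  9700008950009820297613961871751861951871982571298713380921,
  9830009730003700003800003900954032439203003900009430009800,
  570621397203397203786422398203008620008720008200007200006200,
  276103276103832172397823007830007820008760007600002700002800,
  793502942732370491457933007940004730832792398203397203652072,
  574931457933004730004930007930003900007940280792459303893402,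
  2700009700005920002600821792785191710491457903457903439203,
  670922297103297103297103180792298103009800002800009820008970,
  7930009760005920007940796422251971796051490621510291752092,
  7830006850007850008720007860008930009860008920008940009870,
  987613861271251871786051387923861371731682567833006830006730,
  7900009750008760007830007820007840741892482791876191731892,
  9800003800003900003700793041437923009430007430007800008750,
  378923008930008920002800972402870292379203009820007200009200,
  378923842092378903009200009820008940008930892502298103932082,
  861971357923954072953872150782457303290732783101930182874092,
  380152520431720451942172975422961271932172984172892471832172,
  9700007950009620009720003700003900003800352402360152390152,
  389203008930008200008900008920008720007850008700009870009200,
  4930009820009800890172951871982571298713987103380921930182,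
  8620008720008200007200005200006200009830009730008950004530,
  8760007600002700002800160522570621397203397203786422398203,
  832792398203397203610271276103276103832172397823007830007820,
  180792821792439203593241785191942732370491457933007940004730,
  297103297103297103180792298103009800002800009820008970002700,
  8720008930009870008900005900009200007930005700007200792402,
  350791357903357903731892892172982402389203298713009820008200,
  7930009760005920007940796422251971920172540272710391710291,
  7830006850007850008720007860008930009860008920008940009870,
  387923861371731682567833567833583241005430004830006830006730,
  7820007840741892482791876191731892987613861271251871786451,
  7900005800005200005700007200008750009750008760007830005820,
  752402280152290172370581379203378203357203002800002900007800,
  8930298103932082378923008930008920009800002900002800530272,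
  832172861971357923953872180722190722930182920182378923008920,
  280532190532270532942172975422961271932172984172892471875422,
  7960009720006730006740675422251371632152251761642152742152,
  9750008940008900008930008200008920008720007860009870009200,
  8730008630009620009630007850251971795422297513009520007520,
  786131796381732692396723396723976152009650006750009730009860,
  439203572391731592007930009530005920003900009430932162896131,
  6950005930008630009860008640004630006940004830920431439203,
  9300961481693481486933486933486933351861963152006530008650,
  7530480931489303489303951081510481005800008540008950008300,
  7500003500009500009530009700009730009520007650006530007520,
  520391953101730152270932397203150722275103002500002700003700,
  8730008530009530251371675131852671972152952371783092795632,
  9500007520007650003700009700006530009520009650009850009730,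
  751361395723520391397203150722270951275103007500002500002700,
  5940895231785231795231795381763592251391695131720391170932,
  9730008650008730009850008530008740008520008540005740004530,
  8530009860842152785141352481951481371481641582857933485933,
  6800006830009730009650006530008650008300008520009850008730,
  683152963152857933865933640382280632270932468303003700006300,
  9650009520002700009620003700009700009730008620008630005640,
  251961965723542072470521275103002500007500007520006520007650,
  867933720391170932386923397203385923693851856933005630751961,
  5300005800008300785231795381832152389203864152963582832762,
  180532458303458303458303693081468303006800008650006830006300,
  851961951361643152005630006950006540006850006830389203351081,
  951871942832361491693041351491942532974152643982468933468933,
  8630008960009820961871982671298713380921932182290182281491,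
  762152251861005620008650006750005720008620008720008730007860,
  8740007860008640783162786131832172832162386723386723386723,
  785191007950009850005820008750008650006750005720008720008620,
  786241842162842172486723486723486723876152782152962581691572,
  251981985121691582298513008650009520008520008750009850784162,
  439823920431480391003900008940008430009430009830009800791582,
  681572287513007650008520007520008750007860008720009730842932,
  5800008530005820003800008430008200009700007950251871521782,
  9300008300004630340182438203438203590282250832830152003500,
  578943678943007650007840005940005740006940007940005840008940,
  9530009300490831498303951481841792896041951471795141971481,
  8730008620009620009630009600006520007650008650006530009520,
  270951275103007500009500002500002700007520003700008700008520,
  672091396823967833962581720381783402865723387203150722592101,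
  8520008730008620009620009630006940006300006200006700361091,
  387203670521562072275103007500002500002700007520003700008700,
  693101610491469303469203396823967833962581720381680731865723,
  5640009630004530005730005830851361751861632152796402692101,
  6520008520007650008650008700008730008620005840006950009620,
  865723387203532072572402275103002500007500002700007520003700,
  693152843152396823967833720381956833956733362581862451783402,
  5800005300005830251391685131675131642532695131351461261391,
  541692469303006940006900009650006930006300004530005940005900,
  985231190532853101390852940152593041459303459303459303361091,
  6700006200007200710281872101287103002700008700842632398203,
  796241467903467903751461006540006750006940009300006900007940,
  7850007830261871987152972402360721261071710491796201720391,
  6930006940007940004630004730271381397823397823851971009750,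
  942732673041943172741692731692467933467933751461006540006750,
  6750004730006940007940004630004930007930005930006930003900,
  832792439203942632372491796041793041467933467933751461006540,
  6900008940007200007840007800008200005900382091896131831592,
  4630007930003900007650006700007900006940005940007940006200,
  439203983642873642467933004730004830004930005930006930008930,
  3900005640006950005600467903467903467903810391831692510391,
  5730007930007950005930004630004730005740004530005630006930,
  675041478903763542695131594671467903973652456933567933009430,
  796241280792720461751061751961964152456903456903456903456903,
  180592982402971081710481782101940182180692170622897241940152,
  180792298103009800002800009820008970002700009700821792786191,
  6940006930006920007940261971710291972101297103297103297103,
  8750007950005920008920009870008930007860008720008730007930,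
  387923387923387923387923932152983152897152009850005930008530,
  8650006530007520007530006830271381261871987131971381382791,
  9850008940009870008920007960007860008750009650007650009750,
  751361951361851371876513976513367923367923741892591782987513,
  9870008920009430007430005930005830251371675131851361951271,
  793041437923437923437923932182741892438923008940008930008430,
  8650009750009650009760007650006840004530005740007840004630,
  9870008920951761675392976513976513765181876513008750008760,
  467833932182467933741892438923008940009430008930008430007860,
  742532786141751461751361456733005630005640367923367923367923,
  976422261391796241932172786131785231795231742632843172351471,
  984711573412673412582012872511862511832611261471261371942172,
  5000005000005000005000005000005000005594012974511964511]

theorem certW0_ok : krun 9 certW0 [kaddAll 0 (kbase ++ kfour ++ kw0)] = true := by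
  decide +kernel
theorem certW1_ok : krun 9 certW1 [kaddAll 0 (kbase ++ kfour ++ kw1)] = true := by
  decide +kernel
theorem certW2_ok : krun 9 certW2 [kaddAll 0 (kbase ++ kfour ++ kw2)] = true := by
  decide +kernel
theorem certC_ok : krun 10 certC [kaddAll 0 (kbase ++ kfour ++ kfive)] = true := by
  decide +kernel

/-- The mask `K` only records true orientations of the configuration `P`. -/
def KGood (P : ℕ → Pt) (K : ℕ) : Prop :=
  ∀ a b c, a < 10 → b < 10 → c < 10 → kbit K a b c = true → 0 < ori (P a) (P b) (P c)

theorem kbit_eq (K a b c : ℕ) : kbit K a b c = K.testBit (100 * a + (10 * b + c)) := by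
  have h : kbit K a b c = Nat.beq ((K >>> (100 * a + (10 * b + c))) &&& 1) 1 := rfl
  rw [h, Nat.testBit, Nat.and_comm]
  have h2 : (1 &&& K >>> (100 * a + (10 * b + c))) < 2 := by
    have := @Nat.and_le_left 1 (K >>> (100 * a + (10 * b + c)))
    omega
  generalize (1 &&& K >>> (100 * a + (10 * b + c))) = z at *
  interval_cases z <;> rfl

theorem ori_rot (a b c : Pt) : ori a b c = ori b c a := by
  simp only [ori]; ring

theorem ori_swap (a b c : Pt) : ori a c b = - ori a b c := by
  simp only [ori]; ring

theorem kadd_eq (K a b c : ℕ) : kadd K a b c =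
    K ||| (2 ^ (100 * a + (10 * b + c)) ||| (2 ^ (100 * b + (10 * c + a)) |||
      2 ^ (100 * c + (10 * a + b)))) := rfl

theorem KGood_kadd {P : ℕ → Pt} {K a b c : ℕ} (hK : KGood P K) (ha : a < 10) (hb : b < 10)
    (hc : c < 10) (h : 0 < ori (P a) (P b) (P c)) : KGood P (kadd K a b c) := by
  intro x y z hx hy hz hbit
  rw [kbit_eq, kadd_eq] at hbit
  simp only [Nat.testBit_or, Nat.testBit_two_pow, Bool.or_eq_true, decide_eq_true_eq] at hbit
  rcases hbit with h1 | h1 | h1 | h1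
  · exact hK x y z hx hy hz (by rw [kbit_eq]; exact h1)
  · obtain ⟨rfl, rfl, rfl⟩ : a = x ∧ b = y ∧ c = z := by omega
    exact h
  · obtain ⟨rfl, rfl, rfl⟩ : b = x ∧ c = y ∧ a = z := by omega
    rw [← ori_rot]; exact h
  · obtain ⟨rfl, rfl, rfl⟩ : c = x ∧ a = y ∧ b = z := by omega
    rw [ori_rot]; exact h

theorem KGood_kaddAll {P : ℕ → Pt} (l : List (ℕ × ℕ × ℕ))
    (hl : ∀ x ∈ l, (x.1 < 10 ∧ x.2.1 < 10 ∧ x.2.2 < 10) ∧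
      0 < ori (P x.1) (P x.2.1) (P x.2.2)) :
    ∀ K, KGood P K → KGood P (kaddAll K l) := by
  induction l with
  | nil => intro K hK; exact hK
  | cons x l ih =>
    intro K hK
    obtain ⟨a, b, c⟩ := x
    have h := hl (a, b, c) (by simp)
    exact ih (fun y hy => hl y (by simp [hy])) _ (KGood_kadd hK h.1.1 h.1.2.1 h.1.2.2 h.2)

theorem KGood_zero (P : ℕ → Pt) : KGood P 0 := by
  intro a b c _ _ _ h
  rw [kbit_eq] at h
  simp at h

/-- A divided hole in abstract form. -/
def KHole (N : ℕ) (P : ℕ → Pt) (a b c d e : ℕ) : Prop :=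
  (0 < ori (P a) (P b) (P c) ∧ 0 < ori (P a) (P b) (P d) ∧ 0 < ori (P a) (P b) (P e) ∧
   0 < ori (P a) (P c) (P d) ∧ 0 < ori (P a) (P c) (P e) ∧ 0 < ori (P a) (P d) (P e) ∧
   0 < ori (P b) (P c) (P d) ∧ 0 < ori (P b) (P c) (P e) ∧ 0 < ori (P b) (P d) (P e) ∧
   0 < ori (P c) (P d) (P e)) ∧
  (a ≤ 4 ∨ b ≤ 4 ∨ c ≤ 4 ∨ d ≤ 4 ∨ e ≤ 4) ∧ (5 ≤ a ∨ 5 ≤ b ∨ 5 ≤ c ∨ 5 ≤ d ∨ 5 ≤ e) ∧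
  ∀ x < N, 0 < ori (P b) (P a) (P x) ∨ 0 < ori (P c) (P b) (P x) ∨ 0 < ori (P d) (P c) (P x) ∨
    0 < ori (P e) (P d) (P x) ∨ 0 < ori (P a) (P e) (P x) ∨
    x = a ∨ x = b ∨ x = c ∨ x = d ∨ x = e

theorem koutAll_spec {K a b c d e : ℕ} : ∀ {n : ℕ}, koutAll K a b c d e n = true →
    ∀ x < n, kout K a b c d e x = true := by
  intro n
  induction n with
  | zero => intro _ x hx; omega
  | succ n ih =>
    intro h x hx
    simp only [koutAll, Bool.and_eq_true] at h
    rcases Nat.lt_succ_iff_lt_or_eq.mp hx with h1 | h1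
    · exact ih h.2 x h1
    · subst h1; exact h.1

theorem khole_spec {N : ℕ} {P : ℕ → Pt} {K a b c d e : ℕ} (hN : N ≤ 10) (hK : KGood P K)
    (ha : a < N) (hb : b < N) (hc : c < N) (hd : d < N) (he : e < N)
    (h : khole N K a b c d e = true) : KHole N P a b c d e := by
  simp only [khole, Bool.and_eq_true, Bool.or_eq_true, Nat.ble_eq] at h
  obtain ⟨⟨h1, h2, h3, h4, h5, h6, h7, h8, h9, h10⟩, h11, h12, h13⟩ := h
  have ha' : a < 10 := by omega
  have hb' : b < 10 := by omega
  have hc' : c < 10 := by omega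
  have hd' : d < 10 := by omega
  have he' : e < 10 := by omega
  refine ⟨⟨hK _ _ _ ha' hb' hc' h1, hK _ _ _ ha' hb' hd' h2, hK _ _ _ ha' hb' he' h3,
    hK _ _ _ ha' hc' hd' h4, hK _ _ _ ha' hc' he' h5, hK _ _ _ ha' hd' he' h6,
    hK _ _ _ hb' hc' hd' h7, hK _ _ _ hb' hc' he' h8, hK _ _ _ hb' hd' he' h9,
    hK _ _ _ hc' hd' he' h10⟩, h11, h12, ?_⟩
  intro x hx
  have hx' : x < 10 := by omega
  have h14 := koutAll_spec h13 x hx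
  simp only [kout, Bool.or_eq_true, Nat.beq_eq] at h14
  rcases h14 with h | h | h | h | h | h
  · exact Or.inl (hK _ _ _ hb' ha' hx' h)
  · exact Or.inr (Or.inl (hK _ _ _ hc' hb' hx' h))
  · exact Or.inr (Or.inr (Or.inl (hK _ _ _ hd' hc' hx' h)))
  · exact Or.inr (Or.inr (Or.inr (Or.inl (hK _ _ _ he' hd' hx' h))))
  · exact Or.inr (Or.inr (Or.inr (Or.inr (Or.inl (hK _ _ _ ha' he' hx' h)))))
  · exact Or.inr (Or.inr (Or.inr (Or.inr (Or.inr h))))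

theorem gp_identity (a b c d e : Pt) :
    ori a b c * ori a d e + ori a b d * ori a e c + ori a b e * ori a c d = 0 := by
  simp only [ori]; ring

theorem kg1_false {P : ℕ → Pt} {K a b c d e : ℕ} (hK : KGood P K)
    (ha : a < 10) (hb : b < 10) (hc : c < 10) (hd : d < 10) (he : e < 10)
    (h : kg1 K a b c d e = true) : False := by
  simp only [kg1, Bool.and_eq_true] at h
  obtain ⟨h1, h2, h3, h4, h5, h6⟩ := h
  have g := gp_identity (P a) (P b) (P c) (P d) (P e)
  have p1 := mul_pos (hK _ _ _ ha hb hc h1) (hK _ _ _ ha hd he h4)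
  have p2 := mul_pos (hK _ _ _ ha hb hd h2) (hK _ _ _ ha he hc h5)
  have p3 := mul_pos (hK _ _ _ ha hb he h3) (hK _ _ _ ha hc hd h6)
  linarith

theorem kg2_false {P : ℕ → Pt} {K a b c d e : ℕ} (hK : KGood P K)
    (ha : a < 10) (hb : b < 10) (hc : c < 10) (hd : d < 10) (he : e < 10)
    (h : kg2 K a b c d e = true) : False := by
  simp only [kg2, Bool.and_eq_true] at h
  obtain ⟨h1, h2, h3, h4, h5, h6⟩ := h
  have g := gp_identity (P a) (P b) (P c) (P d) (P e)
  have p1 := mul_pos (hK _ _ _ ha hc hb h1) (hK _ _ _ ha he hd h4)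
  have p2 := mul_pos (hK _ _ _ ha hd hb h2) (hK _ _ _ ha hc he h5)
  have p3 := mul_pos (hK _ _ _ ha he hb h3) (hK _ _ _ ha hd hc h6)
  rw [ori_swap (P a) (P b) (P c), ori_swap (P a) (P d) (P e)] at p1
  rw [ori_swap (P a) (P b) (P d), ori_swap (P a) (P e) (P c)] at p2
  rw [ori_swap (P a) (P b) (P e), ori_swap (P a) (P c) (P d)] at p3
  linarith

/-- Hypotheses on a configuration refuted by the checker. -/
structure KHyp (N : ℕ) (P : ℕ → Pt) : Prop where
  hN5 : 5 ≤ N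
  hN : N ≤ 10
  hne : ∀ a b c, a < N → b < N → c < N → a ≠ b → a ≠ c → b ≠ c → ori (P a) (P b) (P c) ≠ 0
  hhole : ∀ a b c d e, a < N → b < N → c < N → d < N → e < N → ¬ KHole N P a b c d e
  hins : ∀ b, 5 ≤ b → b < N → 0 < ori (P 1) (P 2) (P b) → 0 < ori (P 2) (P 3) (P b) →
    0 < ori (P 3) (P 4) (P b) → False

theorem kact_sound {N : ℕ} {P : ℕ → Pt} (H : KHyp N P) {K : ℕ} {st : List ℕ} {g a b c d e : ℕ}
    (ha : a < N) (hb : b < N) (hc : c < N) (hd : d < N) (he : e < N)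
    (h : ∃ k ∈ K :: st, KGood P k) : ∃ k ∈ kact N K st g a b c d e, KGood P k := by
  obtain ⟨hN5, hN, hne, hhole, hins⟩ := H
  obtain ⟨k, hk, hgood⟩ := h
  have ha' : a < 10 := by omega
  have hb' : b < 10 := by omega
  have hc' : c < 10 := by omega
  have hd' : d < 10 := by omega
  have he' : e < 10 := by omega
  unfold kact
  cases hg : Nat.beq g 0 with
  | true =>
    simp only [cond_true]
    cases hab : (Nat.beq a b || (Nat.beq a c || Nat.beq b c)) with
    | true => exact ⟨k, by simpa using hk, hgood⟩
    | false =>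
      simp only [cond_false]
      simp only [Bool.or_eq_false_iff] at hab
      have h1 : a ≠ b := Nat.ne_of_beq_eq_false hab.1
      have h2 : a ≠ c := Nat.ne_of_beq_eq_false hab.2.1
      have h3 : b ≠ c := Nat.ne_of_beq_eq_false hab.2.2
      rcases List.mem_cons.mp hk with rfl | hk
      · rcases lt_or_gt_of_ne (hne a b c ha hb hc h1 h2 h3) with hlt | hgt
        · refine ⟨kadd k a c b, by simp, KGood_kadd hgood ha' hc' hb' ?_⟩
          rw [ori_swap]; linarith
        · exact ⟨kadd k a b c, by simp, KGood_kadd hgood ha' hb' hc' hgt⟩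
      · exact ⟨k, by simp [hk], hgood⟩
  | false =>
    simp only [cond_false]
    rcases List.mem_cons.mp hk with rfl | hk
    · refine ⟨k, ?_, hgood⟩
      have hF : (bif Nat.beq g 1 then kg1 k a b c d e else bif Nat.beq g 2 then kg2 k a b c d e
          else bif Nat.beq g 3 then khole N k a b c d e else bif Nat.beq g 4 then kins k a
          else false) = false := by
        cases Nat.beq g 1 with
        | true =>
          rw [cond_true, ← Bool.not_eq_true]
          exact kg1_false hgood ha' hb' hc' hd' he'
        | false =>
        rw [cond_false]
        cases Nat.beq g 2 with
        | true =>
          rw [cond_true, ← Bool.not_eq_true]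
          exact kg2_false hgood ha' hb' hc' hd' he'
        | false =>
        rw [cond_false]
        cases Nat.beq g 3 with
        | true =>
          rw [cond_true, ← Bool.not_eq_true]
          exact fun h => hhole a b c d e ha hb hc hd he (khole_spec hN hgood ha hb hc hd he h)
        | false =>
        rw [cond_false]
        cases Nat.beq g 4 with
        | true =>
          rw [cond_true, ← Bool.not_eq_true]
          intro h
          simp only [kins, Bool.and_eq_true, Nat.ble_eq] at h
          exact hins a h.1 ha (hgood _ _ _ (by norm_num) (by norm_num) ha' h.2.1)
            (hgood _ _ _ (by norm_num) (by norm_num) ha' h.2.2.1)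
            (hgood _ _ _ (by norm_num) (by norm_num) ha' h.2.2.2)
        | false => rfl
      rw [hF]; simp
    · refine ⟨k, ?_, hgood⟩
      generalize (bif Nat.beq g 1 then kg1 K a b c d e else _ : Bool) = z
      cases z <;> simp [hk]

theorem kstep_sound {N : ℕ} {P : ℕ → Pt} (H : KHyp N P) {c : ℕ} {st : List ℕ} (h : ∃ k ∈ st, KGood P k) :
    ∃ k ∈ kstep N c st, KGood P k := by
  have hpos : 0 < N := by have := H.hN5; omega
  cases st with
  | nil => simp at h
  | cons K st =>
    exact kact_sound H (Nat.mod_lt _ hpos) (Nat.mod_lt _ hpos)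
      (Nat.mod_lt _ hpos) (Nat.mod_lt _ hpos) (Nat.mod_lt _ hpos) h

theorem ksteps_sound {N : ℕ} {P : ℕ → Pt} (H : KHyp N P) : ∀ (n c : ℕ) (st : List ℕ), (∃ k ∈ st, KGood P k) →
    ∃ k ∈ ksteps N n c st, KGood P k := by
  intro n
  induction n with
  | zero => intro c st h; exact h
  | succ n ih => intro c st h; exact ih _ _ (kstep_sound H h)

theorem krun_sound {N : ℕ} {P : ℕ → Pt} (H : KHyp N P) : ∀ (cs st : List ℕ), krun N cs st = true → ¬ ∃ k ∈ st, KGood P k := by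
  intro cs
  induction cs with
  | nil => intro st h; cases st with
    | nil => simp
    | cons K st => simp [krun] at h
  | cons c cs ih =>
    intro st h; cases st with
    | nil => simp
    | cons K st =>
      intro hg
      exact ih _ h (ksteps_sound H 10 c (K :: st) hg)

/-! ### Basic planar geometry -/

theorem hull_lin {S : Set Pt} {α β c : ℝ} (h : ∀ z ∈ S, c ≤ α * z.1 + β * z.2) {z : Pt}
    (hz : z ∈ convexHull ℝ S) : c ≤ α * z.1 + β * z.2 := by
  have hconv : Convex ℝ {z : Pt | c ≤ α * z.1 + β * z.2} := by
    intro x hx y hy a b ha hb hab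
    simp only [Set.mem_ofPred_eq, Prod.fst_add, Prod.snd_add, Prod.smul_fst, Prod.smul_snd,
      smul_eq_mul] at hx hy ⊢
    have e : c = a * c + b * c := by rw [← add_mul, hab, one_mul]
    have h1 := mul_le_mul_of_nonneg_left hx ha
    have h2 := mul_le_mul_of_nonneg_left hy hb
    linarith
  exact convexHull_min h hconv hz

theorem hull_ori {S : Set Pt} {u w : Pt} (h : ∀ z ∈ S, 0 ≤ ori u w z) {z : Pt}
    (hz : z ∈ convexHull ℝ S) : 0 ≤ ori u w z := by
  have key : ∀ z : Pt, ori u w z =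
      (-(w.2 - u.2)) * z.1 + (w.1 - u.1) * z.2 -
        ((-(w.2 - u.2)) * u.1 + (w.1 - u.1) * u.2) := by
    intro z; simp only [ori]; ring
  have := @hull_lin S (-(w.2 - u.2)) (w.1 - u.1)
    ((-(w.2 - u.2)) * u.1 + (w.1 - u.1) * u.2) (fun z hz => by
      have := h z hz; rw [key] at this; linarith) z hz
  rw [key]; linarith

theorem tri_mem {S : Set Pt} (hS : Convex ℝ S) {u v w b : Pt} (hu : u ∈ S) (hv : v ∈ S)
    (hw : w ∈ S) (h1 : 0 ≤ ori v w b) (h2 : 0 ≤ ori w u b) (h3 : 0 ≤ ori u v b)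
    (hpos : 0 < ori u v w) : b ∈ S := by
  have hsum : ori v w b + ori w u b + ori u v b = ori u v w := by simp only [ori]; ring
  have hne : ori u v w ≠ 0 := hpos.ne'
  have h := hS.sum_mem (t := (Finset.univ : Finset (Fin 3)))
    (w := ![ori v w b / ori u v w, ori w u b / ori u v w, ori u v b / ori u v w])
    (z := ![u, v, w]) (by
      intro i _
      fin_cases i
      · exact div_nonneg h1 hpos.le
      · exact div_nonneg h2 hpos.le
      · exact div_nonneg h3 hpos.le) (by
      rw [Fin.sum_univ_three]
      simp only [Matrix.cons_val_zero, Matrix.cons_val_one, Matrix.cons_val]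
      rw [← add_div, ← add_div, hsum, div_self hne]) (by
      intro i _
      fin_cases i
      · exact hu
      · exact hv
      · exact hw)
  rw [Fin.sum_univ_three] at h
  simp only [Matrix.cons_val_zero, Matrix.cons_val_one, Matrix.cons_val] at h
  convert h using 1
  ext
  · simp only [Prod.fst_add, Prod.smul_fst, smul_eq_mul]
    field_simp
    simp only [ori]; ring
  · simp only [Prod.snd_add, Prod.smul_snd, smul_eq_mul]
    field_simp
    simp only [ori]; ring

theorem collinear_of_ori {p q r : Pt} (hpq : p ≠ q) (h : ori p q r = 0) :
    Collinear ℝ ({p, q, r} : Set Pt) := by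
  rw [collinear_iff_of_mem (p₀ := p) (by simp)]
  have hne : (q.1 - p.1) ^ 2 + (q.2 - p.2) ^ 2 ≠ 0 := by
    intro h0
    apply hpq
    have h1 : q.1 - p.1 = 0 := by nlinarith [sq_nonneg (q.1 - p.1), sq_nonneg (q.2 - p.2)]
    have h2 : q.2 - p.2 = 0 := by nlinarith [sq_nonneg (q.1 - p.1), sq_nonneg (q.2 - p.2)]
    ext <;> linarith
  refine ⟨q - p, ?_⟩
  intro x hx
  simp only [Set.mem_insert_iff, Set.mem_singleton_iff] at hx
  rcases hx with rfl | rfl | rfl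
  · exact ⟨0, by simp⟩
  · exact ⟨1, by simp⟩
  · refine ⟨((x.1 - p.1) * (q.1 - p.1) + (x.2 - p.2) * (q.2 - p.2)) /
      ((q.1 - p.1) ^ 2 + (q.2 - p.2) ^ 2), ?_⟩
    simp only [ori] at h
    ext
    · simp only [vadd_eq_add, Prod.fst_add, Prod.smul_fst, Prod.fst_sub, smul_eq_mul]
      field_simp
      linear_combination (-(q.2 - p.2)) * h
    · simp only [vadd_eq_add, Prod.snd_add, Prod.smul_snd, Prod.snd_sub, smul_eq_mul]
      field_simp
      linear_combination ((q.1 - p.1)) * h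

theorem GenPos.ori_ne {P : Set Pt} (h : GenPos P) {p q r : Pt} (hp : p ∈ P) (hq : q ∈ P)
    (hr : r ∈ P) (h1 : p ≠ q) (h2 : p ≠ r) (h3 : q ≠ r) : ori p q r ≠ 0 :=
  fun h0 => h p hp q hq r hr h1 h2 h3 (collinear_of_ori h1 h0)

theorem not_interior_of_max {S : Set Pt} {α β : ℝ} (hne : α ≠ 0 ∨ β ≠ 0) {z : Pt}
    (h : ∀ w ∈ S, α * w.1 + β * w.2 ≤ α * z.1 + β * z.2) :
    z ∉ interior (convexHull ℝ S) := by
  intro hz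
  have hmem : convexHull ℝ S ∈ nhds z := mem_interior_iff_mem_nhds.mp hz
  have hcont : Filter.Tendsto (fun t : ℝ => (z.1 + t * α, z.2 + t * β)) (nhds 0) (nhds z) := by
    have : Continuous (fun t : ℝ => ((z.1 + t * α, z.2 + t * β) : Pt)) := by fun_prop
    have h2 := this.tendsto 0
    simpa using h2
  have hev := hcont.eventually hmem
  have hev2 : ∀ᶠ t in nhdsWithin (0:ℝ) (Set.Ioi 0), (z.1 + t * α, z.2 + t * β) ∈ convexHull ℝ S :=
    hev.filter_mono nhdsWithin_le_nhds
  obtain ⟨t, ht1, ht2⟩ := (hev2.and self_mem_nhdsWithin).exists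
  have ht : (0:ℝ) < t := ht2
  have := @hull_lin S (-α) (-β) (-(α * z.1 + β * z.2)) (fun w hw => by
    have := h w hw; linarith) _ ht1
  simp only at this
  have hpos : 0 < α * α + β * β := by
    rcases hne with h | h
    · have := mul_self_pos.mpr h; nlinarith [mul_self_nonneg β]
    · have := mul_self_pos.mpr h; nlinarith [mul_self_nonneg α]
  nlinarith [mul_pos ht hpos]

theorem onHull_of_max {P : Finset Pt} {α β : ℝ} (hne : α ≠ 0 ∨ β ≠ 0) {z : Pt} (hz : z ∈ P)
    (h : ∀ w ∈ P, α * w.1 + β * w.2 ≤ α * z.1 + β * z.2) : OnHullBoundary P z :=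
  ⟨subset_closure (subset_convexHull ℝ _ hz), not_interior_of_max hne h⟩

theorem extreme_of_onHull {P : Finset Pt} (hgen : GenPos (↑P : Set Pt)) {x : Pt} (hx : x ∈ P)
    (hint : (interior (convexHull ℝ (↑P : Set Pt))).Nonempty) (hb : OnHullBoundary P x) :
    x ∉ convexHull ℝ ((↑P : Set Pt) \ {x}) := by
  have hcv := convex_convexHull ℝ (↑P : Set Pt)
  obtain ⟨f, hf⟩ := geometric_hahn_banach_open_point hcv.interior isOpen_interior hb.2
  have hle : ∀ z ∈ convexHull ℝ (↑P : Set Pt), f z ≤ f x := by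
    intro z hz
    have hz2 : z ∈ closure (interior (convexHull ℝ (↑P : Set Pt))) := by
      rw [hcv.closure_interior_eq_closure_of_nonempty_interior hint]
      exact subset_closure hz
    have hcl : IsClosed {z : Pt | f z ≤ f x} := isClosed_le f.continuous continuous_const
    exact closure_minimal (fun y hy => (hf y hy).le) hcl hz2
  have hconv : ∀ y : Pt, f y = f x → Convex ℝ {z : Pt | f z < f x ∨ z = y} := by
    intro y hy u hu v hv a b ha hb hab
    simp only [Set.mem_ofPred_eq] at hu hv ⊢
    by_cases huv : u = y ∧ v = y
    · right; rw [huv.1, huv.2, ← add_smul, hab, one_smul]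
    · have hfu : f u ≤ f x := by rcases hu with h | h; exacts [h.le, (h ▸ hy).le]
      have hfv : f v ≤ f x := by rcases hv with h | h; exacts [h.le, (h ▸ hy).le]
      rcases eq_or_lt_of_le ha with ha0 | ha0
      · have hb1 : b = 1 := by linarith
        subst hb1; rw [← ha0]; simpa using hv
      rcases eq_or_lt_of_le hb with hb0 | hb0
      · have ha1 : a = 1 := by linarith
        subst ha1; rw [← hb0]; simpa using hu
      left
      rw [map_add, map_smul, map_smul, smul_eq_mul, smul_eq_mul]
      have e : f x = a * f x + b * f x := by rw [← add_mul, hab, one_mul]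
      have : f u < f x ∨ f v < f x := by
        by_contra hcon
        push Not at hcon
        apply huv
        constructor
        · rcases hu with h | h
          · linarith [hcon.1]
          · exact h
        · rcases hv with h | h
          · linarith [hcon.2]
          · exact h
      rcases this with h | h
      · have h1 := mul_lt_mul_of_pos_left h ha0
        have h2 := mul_le_mul_of_nonneg_left hfv hb
        linarith
      · have h1 := mul_lt_mul_of_pos_left h hb0
        have h2 := mul_le_mul_of_nonneg_left hfu ha
        linarith
  intro hmem
  -- two points on the supporting line
  have huniq : ∀ y ∈ P, ∀ y' ∈ P, y ≠ x → y' ≠ x → f y = f x → f y' = f x → y = y' := by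
    intro y hy y' hy' hyx hyx' h1 h2
    by_contra hyy
    have hcol := hgen.ori_ne hx hy hy' (Ne.symm hyx) (Ne.symm hyx') hyy
    obtain ⟨a, ha⟩ := hint
    have hfa := hf a ha
    have hlin : ∀ z : Pt, f z = z.1 * f (1, 0) + z.2 * f (0, 1) := by
      intro z
      have : z = z.1 • ((1, 0) : Pt) + z.2 • ((0, 1) : Pt) := by ext <;> simp
      conv_lhs => rw [this]
      rw [map_add, map_smul, map_smul, smul_eq_mul, smul_eq_mul]
    rw [hlin, hlin x] at h1 h2 hfa
    set α := f (1, 0)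
    set β := f (0, 1)
    apply hcol
    have e1 : (y.1 - x.1) * α + (y.2 - x.2) * β = 0 := by linarith
    have e2 : (y'.1 - x.1) * α + (y'.2 - x.2) * β = 0 := by linarith
    have ea : ori x y y' * α = 0 := by
      simp only [ori]; linear_combination (y'.2 - x.2) * e1 - (y.2 - x.2) * e2
    have eb : ori x y y' * β = 0 := by
      simp only [ori]; linear_combination (y.1 - x.1) * e2 - (y'.1 - x.1) * e1
    by_contra h0
    have hα : α = 0 := by rcases mul_eq_zero.mp ea with h | h; exacts [absurd h h0, h]
    have hβ : β = 0 := by rcases mul_eq_zero.mp eb with h | h; exacts [absurd h h0, h]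
    rw [hα, hβ] at hfa
    simp at hfa
  by_cases hy : ∃ y ∈ P, y ≠ x ∧ f y = f x
  · obtain ⟨y, hyP, hyx, hfy⟩ := hy
    have hsub : ((↑P : Set Pt) \ {x}) ⊆ {z : Pt | f z < f x ∨ z = y} := by
      rintro z ⟨hzP, hzx⟩
      rcases (hle z (subset_convexHull ℝ _ hzP)).lt_or_eq with h | h
      · exact Or.inl h
      · exact Or.inr (huniq z hzP y hyP hzx hyx h hfy)
    rcases convexHull_min hsub (hconv y hfy) hmem with h | h
    · exact lt_irrefl _ h
    · exact hyx h.symm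
  · push Not at hy
    have hsub : ((↑P : Set Pt) \ {x}) ⊆ {z : Pt | f z < f x} := by
      rintro z ⟨hzP, hzx⟩
      exact lt_of_le_of_ne (hle z (subset_convexHull ℝ _ hzP)) (hy z hzP hzx)
    have := convexHull_min hsub (convex_halfSpace_lt f.toLinearMap.isLinear (f x)) hmem
    simp at this

/-- Enumerate a finset increasingly along an injective key. -/
theorem exists_sorted (D : Finset Pt) (key : Pt → ℝ) (hinj : Set.InjOn key (↑D : Set Pt)) :
    ∃ f : Fin D.card → Pt, (∀ i, f i ∈ D) ∧ (∀ i j, i < j → key (f i) < key (f j)) ∧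
      ∀ z ∈ D, ∃ i, f i = z := by
  have hc : (D.image key).card = D.card := Finset.card_image_of_injOn hinj
  let e := (D.image key).orderEmbOfFin hc
  have hmem : ∀ i, ∃ z ∈ D, key z = e i := by
    intro i
    have := (D.image key).orderEmbOfFin_mem hc i
    exact Finset.mem_image.mp this
  choose f hf hk using hmem
  refine ⟨f, hf, ?_, ?_⟩
  · intro i j hij
    rw [hk, hk]
    exact e.strictMono hij
  · intro z hz
    have h1 : key z ∈ Set.range e := by
      rw [Finset.range_orderEmbOfFin]
      exact Finset.mem_coe.mpr (Finset.mem_image_of_mem key hz)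
    obtain ⟨i, hi⟩ := h1
    refine ⟨i, hinj (hf i) hz ?_⟩
    rw [hk, hi]

/-- Enumerate a finset on one side of a line through `t` in angular order around `t`. -/
theorem exists_sorted_angular (D : Finset Pt) (t : Pt) (α β : ℝ)
    (hside : ∀ z ∈ D, 0 < α * (z.1 - t.1) + β * (z.2 - t.2))
    (hgp : ∀ z ∈ D, ∀ w ∈ D, z ≠ w → ori t z w ≠ 0) :
    ∃ f : Fin D.card → Pt, (∀ i, f i ∈ D) ∧ (∀ i j, i < j → 0 < ori t (f i) (f j)) ∧
      ∀ z ∈ D, ∃ i, f i = z := by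
  have hab : D.Nonempty → 0 < α * α + β * β := by
    rintro ⟨z, hz⟩
    have h := hside z hz
    by_contra hcon
    have h1 : α = 0 := by nlinarith [mul_self_nonneg α, mul_self_nonneg β]
    have h2 : β = 0 := by nlinarith [mul_self_nonneg α, mul_self_nonneg β]
    rw [h1, h2] at h; simp at h
  set num : Pt → ℝ := fun z => α * (z.2 - t.2) - β * (z.1 - t.1) with hnum
  set den : Pt → ℝ := fun z => α * (z.1 - t.1) + β * (z.2 - t.2) with hden
  have hid : ∀ z w, den z * num w - num z * den w = (α * α + β * β) * ori t z w := by
    intro z w; simp only [hnum, hden, ori]; ring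
  have hlt : ∀ z ∈ D, ∀ w ∈ D, num z / den z < num w / den w → 0 < ori t z w := by
    intro z hz w hw h
    rw [div_lt_div_iff₀ (hside z hz) (hside w hw)] at h
    have h2 := hid z w
    have h3 : 0 < (α * α + β * β) * ori t z w := by rw [← h2]; linarith
    exact (pos_iff_pos_of_mul_pos h3).mp (hab ⟨z, hz⟩)
  have hinj : Set.InjOn (fun z => num z / den z) (↑D : Set Pt) := by
    intro z hz w hw h
    by_contra hzw
    simp only at h
    rw [div_eq_div_iff (hside z hz).ne' (hside w hw).ne'] at h
    have h2 := hid z w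
    have h3 : (α * α + β * β) * ori t z w = 0 := by rw [← h2]; linarith
    rcases mul_eq_zero.mp h3 with h4 | h4
    · exact (hab ⟨z, hz⟩).ne' h4
    · exact hgp z hz w hw hzw h4
  obtain ⟨f, h1, h2, h3⟩ := exists_sorted D _ hinj
  exact ⟨f, h1, fun i j hij => hlt _ (h1 i) _ (h1 j) (h2 i j hij), h3⟩

/-! ### From abstract holes to real ones -/

theorem vertex_notMem {S : Set Pt} {p n r s : Pt} {u : Pt}
    (hS : ∀ z ∈ S, z = n ∨ z = r ∨ z = s ∨ z = p) (h1 : 0 < ori u n p) (h2 : 0 < ori n r p)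
    (h3 : 0 < ori n s p) : u ∉ convexHull ℝ S := by
  intro hu
  have h := hull_ori (u := p) (w := n) (S := S) (by
    intro z hz
    rcases hS z hz with rfl | rfl | rfl | rfl
    · simp [ori]; linarith
    · rw [ori_rot]; exact h2.le
    · rw [ori_rot]; exact h3.le
    · simp [ori]) hu
  have e : ori p n u = - ori u n p := by simp only [ori]; ring
  linarith

theorem ori_pos_ne {a b c : Pt} (h : 0 < ori a b c) : a ≠ b ∧ a ≠ c ∧ b ≠ c := by
  refine ⟨?_, ?_, ?_⟩ <;> rintro rfl <;> simp only [ori] at h <;> linarith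

theorem pentagon {u0 u1 u2 u3 u4 : Pt}
    (h012 : 0 < ori u0 u1 u2) (h013 : 0 < ori u0 u1 u3) (h014 : 0 < ori u0 u1 u4)
    (h023 : 0 < ori u0 u2 u3) (h024 : 0 < ori u0 u2 u4) (h034 : 0 < ori u0 u3 u4)
    (h123 : 0 < ori u1 u2 u3) (h124 : 0 < ori u1 u2 u4) (h134 : 0 < ori u1 u3 u4)
    (h234 : 0 < ori u2 u3 u4) :
    ({u0, u1, u2, u3, u4} : Finset Pt).card = 5 ∧
    ConvexPos (↑({u0, u1, u2, u3, u4} : Finset Pt) : Set Pt) ∧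
    ∀ z ∈ convexHull ℝ (↑({u0, u1, u2, u3, u4} : Finset Pt) : Set Pt),
      0 ≤ ori u0 u1 z ∧ 0 ≤ ori u1 u2 z ∧ 0 ≤ ori u2 u3 z ∧ 0 ≤ ori u3 u4 z ∧
        0 ≤ ori u4 u0 z := by
  obtain ⟨n01, n02, n12⟩ := ori_pos_ne h012
  obtain ⟨n03, n04, n34⟩ := ori_pos_ne h034
  obtain ⟨_, n13, n23⟩ := ori_pos_ne h123
  obtain ⟨_, n14, n24⟩ := ori_pos_ne h124
  have r : ∀ {a b c : Pt}, 0 < ori a b c → 0 < ori b c a := fun h => by rwa [← ori_rot]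
  refine ⟨?_, ?_, ?_⟩
  · rw [Finset.card_insert_of_notMem, Finset.card_insert_of_notMem, Finset.card_insert_of_notMem,
      Finset.card_insert_of_notMem, Finset.card_singleton] <;> simp [*]
  · intro p hp
    simp only [Finset.coe_insert, Finset.coe_singleton, Set.mem_insert_iff,
      Set.mem_singleton_iff] at hp
    rcases hp with rfl | rfl | rfl | rfl | rfl
    · refine vertex_notMem (n := u1) (r := u2) (s := u3) (p := u4) ?_ h014 h124 h134
      intro z hz; simp at hz; tauto
    · refine vertex_notMem (n := u2) (r := u3) (s := u4) (p := u0) ?_ (r h012) (r h023) (r h024)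
      intro z hz; simp at hz; tauto
    · refine vertex_notMem (n := u3) (r := u4) (s := u0) (p := u1) ?_ (r h123) (r h134)
        (r (r h013))
      intro z hz; simp at hz; tauto
    · refine vertex_notMem (n := u4) (r := u0) (s := u1) (p := u2) ?_ (r h234) (r (r h024))
        (r (r h124))
      intro z hz; simp at hz; tauto
    · refine vertex_notMem (n := u0) (r := u1) (s := u2) (p := u3) ?_ (r (r h034)) h013 h023
      intro z hz; simp at hz; tauto
  · intro z hz
    refine ⟨hull_ori ?_ hz, hull_ori ?_ hz, hull_ori ?_ hz, hull_ori ?_ hz, hull_ori ?_ hz⟩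
    all_goals
      intro w hw
      simp only [Finset.coe_insert, Finset.coe_singleton, Set.mem_insert_iff,
        Set.mem_singleton_iff] at hw
      have z1 : ∀ a b : Pt, ori a b a = 0 := fun a b => by simp [ori]
      have z2 : ∀ a b : Pt, ori a b b = 0 := fun a b => by simp only [ori]; ring
      rcases hw with rfl | rfl | rfl | rfl | rfl <;>
        first
        | exact (z1 _ _).ge
        | exact (z2 _ _).ge
        | exact le_of_lt (by assumption)
        | exact le_of_lt (r (by assumption))
        | exact le_of_lt (r (r (by assumption)))

theorem dividedHole_of_khole {A B : Finset Pt} {N : ℕ} {P : ℕ → Pt}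
    (hPA : ∀ i < 5, P i ∈ A) (hPB : ∀ i, 5 ≤ i → i < N → P i ∈ B)
    (hrest : ∀ z ∈ A ∪ B, (∀ i < N, z ≠ P i) → ∀ H : Set Pt, (∀ w ∈ H, ∃ i < N, w = P i) →
      z ∉ convexHull ℝ H)
    {a b c d e : ℕ} (ha : a < N) (hb : b < N) (hc : c < N) (hd : d < N) (he : e < N)
    (h : KHole N P a b c d e) : DividedFiveHole A B {P a, P b, P c, P d, P e} := by
  obtain ⟨⟨h1, h2, h3, h4, h5, h6, h7, h8, h9, h10⟩, h11, h12, h13⟩ := h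
  obtain ⟨hcard, hconv, hhull⟩ := pentagon h1 h2 h3 h4 h5 h6 h7 h8 h9 h10
  have hPC : ∀ i < N, P i ∈ A ∪ B := by
    intro i hi
    rcases lt_or_ge i 5 with h | h
    · exact Finset.mem_union_left _ (hPA i h)
    · exact Finset.mem_union_right _ (hPB i h hi)
  refine ⟨⟨?_, hcard, hconv, ?_⟩, ?_, ?_⟩
  · intro z hz
    simp only [Finset.mem_insert, Finset.mem_singleton] at hz
    rcases hz with rfl | rfl | rfl | rfl | rfl
    exacts [hPC _ ha, hPC _ hb, hPC _ hc, hPC _ hd, hPC _ he]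
  · intro z hz hzH hzc
    by_cases hzi : ∀ i < N, z ≠ P i
    · refine hrest z hz hzi _ ?_ hzc
      intro w hw
      simp only [Finset.coe_insert, Finset.coe_singleton, Set.mem_insert_iff,
        Set.mem_singleton_iff] at hw
      rcases hw with rfl | rfl | rfl | rfl | rfl
      exacts [⟨a, ha, rfl⟩, ⟨b, hb, rfl⟩, ⟨c, hc, rfl⟩, ⟨d, hd, rfl⟩, ⟨e, he, rfl⟩]
    · push Not at hzi
      obtain ⟨i, hi, rfl⟩ := hzi
      have h14 := hhull _ hzc
      obtain ⟨g1, g2, g3, g4, g5⟩ := h14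
      have sw : ∀ u v w : Pt, ori v u w = - ori u v w := fun u v w => by simp only [ori]; ring
      simp only [Finset.mem_insert, Finset.mem_singleton, not_or] at hzH
      rcases h13 i hi with h | h | h | h | h | h | h | h | h | h
      · rw [sw] at h; linarith
      · rw [sw] at h; linarith
      · rw [sw] at h; linarith
      · rw [sw] at h; linarith
      · rw [sw] at h; linarith
      · exact hzH.1 (by rw [h])
      · exact hzH.2.1 (by rw [h])
      · exact hzH.2.2.1 (by rw [h])
      · exact hzH.2.2.2.1 (by rw [h])
      · exact hzH.2.2.2.2 (by rw [h])
  · rcases h11 with h | h | h | h | h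
    · exact ⟨P a, by simp, hPA _ (by omega)⟩
    · exact ⟨P b, by simp, hPA _ (by omega)⟩
    · exact ⟨P c, by simp, hPA _ (by omega)⟩
    · exact ⟨P d, by simp, hPA _ (by omega)⟩
    · exact ⟨P e, by simp, hPA _ (by omega)⟩
  · rcases h12 with h | h | h | h | h
    · exact ⟨P a, by simp, hPB _ h ha⟩
    · exact ⟨P b, by simp, hPB _ h hb⟩
    · exact ⟨P c, by simp, hPB _ h hc⟩
    · exact ⟨P d, by simp, hPB _ h hd⟩
    · exact ⟨P e, by simp, hPB _ h he⟩

/-! ### The cone lemma -/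

theorem hull_fst_lt {S : Set Pt} {c : ℝ} (h : ∀ z ∈ S, z.1 < c) {z : Pt}
    (hz : z ∈ convexHull ℝ S) : z.1 < c := by
  have hconv : Convex ℝ {z : Pt | z.1 < c} :=
    convex_halfSpace_lt (LinearMap.fst ℝ ℝ ℝ).isLinear c
  exact convexHull_min h hconv hz

/-- Five points `a, v0, …, v3` of `A` in convex position such that the cone at `a` spanned by
`v0` and `v3` contains no other points of `A`, except possibly an extreme point `x` of `C`. -/
structure ConeData (x0 : ℝ) (A B : Finset Pt) (a v0 v1 v2 v3 x : Pt) : Prop where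
  hA : ∀ p ∈ A, p.1 < x0
  hB : ∀ p ∈ B, x0 < p.1
  hgen : GenPos (↑(A ∪ B) : Set Pt)
  hx : Set.InjOn Prod.fst (↑(A ∪ B) : Set Pt)
  hnh : ¬ ∃ H : Finset Pt, DividedFiveHole A B H
  ma : a ∈ A
  m0 : v0 ∈ A
  m1 : v1 ∈ A
  m2 : v2 ∈ A
  m3 : v3 ∈ A
  a01 : 0 < ori a v0 v1
  a02 : 0 < ori a v0 v2
  a03 : 0 < ori a v0 v3
  a12 : 0 < ori a v1 v2
  a13 : 0 < ori a v1 v3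
  a23 : 0 < ori a v2 v3
  o012 : 0 < ori v0 v1 v2
  o013 : 0 < ori v0 v1 v3
  o023 : 0 < ori v0 v2 v3
  o123 : 0 < ori v1 v2 v3
  hcone : ∀ z ∈ A, 0 ≤ ori a v0 z → 0 ≤ ori a z v3 →
    z = a ∨ z = v0 ∨ z = v1 ∨ z = v2 ∨ z = v3 ∨ z = x
  hext : x ∉ convexHull ℝ ((↑(A ∪ B) : Set Pt) \ {x})

/-- The labelled configuration given to the checker. -/
def kcfg (a v0 v1 v2 v3 : Pt) (g : ℕ → Pt) : ℕ → Pt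
  | 0 => a
  | 1 => v0
  | 2 => v1
  | 3 => v2
  | 4 => v3
  | k + 5 => g k

theorem coneData_hyp {x0 : ℝ} {A B : Finset Pt} {a v0 v1 v2 v3 x : Pt}
    (C : ConeData x0 A B a v0 v1 v2 v3 x) {n : ℕ} (hn : n ≤ 5) {g : ℕ → Pt}
    (gB : ∀ k < n, g k ∈ B) (gl : ∀ k < n, 0 < ori a v0 (g k)) (gr : ∀ k < n, 0 < ori a (g k) v3)
    (gs : ∀ i j, i < j → j < n → 0 < ori v0 (g i) (g j))
    (gc : ∀ z ∈ B, 0 ≤ ori a v0 z → 0 ≤ ori a z v3 → (∀ k < n, z ≠ g k) →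
      ∀ k < n, (g k).1 < z.1) :
    KHyp (5 + n) (kcfg a v0 v1 v2 v3 g) := by
  set P := kcfg a v0 v1 v2 v3 g with hP
  obtain ⟨n0, n1, n01⟩ := ori_pos_ne C.a01
  obtain ⟨n2, n3, n23⟩ := ori_pos_ne C.a23
  obtain ⟨_, n02, n12⟩ := ori_pos_ne C.o012
  obtain ⟨_, n03, n13⟩ := ori_pos_ne C.o013
  have hPA : ∀ i < 5, P i ∈ A := by
    intro i hi
    interval_cases i
    exacts [C.ma, C.m0, C.m1, C.m2, C.m3]
  have hPg : ∀ i, 5 ≤ i → P i = g (i - 5) := by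
    intro i hi
    obtain ⟨k, rfl⟩ := Nat.exists_eq_add_of_le' hi
    rfl
  have hPB : ∀ i, 5 ≤ i → i < 5 + n → P i ∈ B := by
    intro i hi hi2
    rw [hPg i hi]
    exact gB _ (by omega)
  have hPC : ∀ i < 5 + n, P i ∈ A ∪ B := by
    intro i hi
    rcases lt_or_ge i 5 with h | h
    · exact Finset.mem_union_left _ (hPA i h)
    · exact Finset.mem_union_right _ (hPB i h hi)
  have hlt : ∀ i j, i < j → j < 5 + n → P i ≠ P j := by
    intro i j hij hj
    rcases lt_or_ge i 5 with hi5 | hi5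
    · rcases lt_or_ge j 5 with hj5 | hj5
      · interval_cases j <;> interval_cases i <;> assumption
      · intro h
        have h1 := C.hA _ (hPA i hi5)
        have h2 := C.hB _ (hPB j hj5 hj)
        rw [h] at h1; linarith
    · rw [hPg i hi5, hPg j (by omega)]
      exact (ori_pos_ne (gs (i - 5) (j - 5) (by omega) (by omega))).2.2
  have hinj : ∀ i j, i < 5 + n → j < 5 + n → i ≠ j → P i ≠ P j := by
    intro i j hi hj hij
    rcases lt_or_gt_of_ne hij with h | h
    · exact hlt i j h hj
    · exact (hlt j i h hi).symm
  have zz1 : ∀ u w : Pt, ori u w w = 0 := fun u w => by simp only [ori]; ring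
  have zz2 : ∀ u w : Pt, ori u w u = 0 := fun u w => by simp only [ori]; ring
  have zz3 : ∀ u w : Pt, ori u u w = 0 := fun u w => by simp only [ori]; ring
  have hcl : ∀ i < 5 + n, 0 ≤ ori a v0 (P i) := by
    intro i hi
    rcases lt_or_ge i 5 with h | h
    · interval_cases i
      exacts [(zz2 _ _).ge, (zz1 _ _).ge, C.a01.le, C.a02.le, C.a03.le]
    · rw [hPg i h]; exact (gl _ (by omega)).le
  have hcr : ∀ i < 5 + n, 0 ≤ ori a (P i) v3 := by
    intro i hi
    rcases lt_or_ge i 5 with h | h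
    · interval_cases i
      exacts [(zz3 _ _).ge, C.a03.le, C.a13.le, C.a23.le, (zz1 _ _).ge]
    · rw [hPg i h]; exact (gr _ (by omega)).le
  have rr : ∀ z, ori v3 a z = ori a z v3 := fun z => ori_rot _ _ _
  refine ⟨by omega, by omega, ?_, ?_, ?_⟩
  · intro i j k hi hj hk hij hik hjk
    exact C.hgen.ori_ne (hPC i hi) (hPC j hj) (hPC k hk) (hinj i j hi hj hij)
      (hinj i k hi hk hik) (hinj j k hj hk hjk)
  · intro i j k l m hi hj hk hl hm hh
    refine C.hnh ⟨_, dividedHole_of_khole hPA hPB ?_ hi hj hk hl hm hh⟩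
    intro z hz hzP H hH hzH
    have z1 : 0 ≤ ori a v0 z := hull_ori (by
      intro w hw; obtain ⟨i, hi, rfl⟩ := hH w hw; exact hcl i hi) hzH
    have z2 : 0 ≤ ori a z v3 := by
      rw [← rr]
      exact hull_ori (by
        intro w hw; obtain ⟨i, hi, rfl⟩ := hH w hw; rw [rr]; exact hcr i hi) hzH
    rcases Finset.mem_union.mp hz with hzA | hzB
    · rcases C.hcone z hzA z1 z2 with h | h | h | h | h | h
      · exact hzP 0 (by omega) h
      · exact hzP 1 (by omega) h
      · exact hzP 2 (by omega) h
      · exact hzP 3 (by omega) h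
      · exact hzP 4 (by omega) h
      · subst h
        apply C.hext
        refine convexHull_mono ?_ hzH
        intro w hw
        obtain ⟨i, hi, rfl⟩ := hH w hw
        exact ⟨hPC i hi, fun h => hzP i hi h.symm⟩
    · have hzg : ∀ k < n, z ≠ g k := by
        intro k hk h
        exact hzP (k + 5) (by omega) h
      have h1 := gc z hzB z1 z2 hzg
      have h2 := hull_fst_lt (c := z.1) (by
        intro w hw
        obtain ⟨i, hi, rfl⟩ := hH w hw
        rcases lt_or_ge i 5 with h | h
        · exact (C.hA _ (hPA i h)).trans (C.hB _ hzB)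
        · rw [hPg i h]; exact h1 _ (by omega)) hzH
      exact lt_irrefl _ h2
  · intro b hb5 hb h1 h2 h3
    have hbB := C.hB _ (hPB b hb5 hb)
    have hl := hcl b hb
    have hr := hcr b hb
    have hconv : Convex ℝ {z : Pt | z.1 < x0} :=
      convex_halfSpace_lt (LinearMap.fst ℝ ℝ ℝ).isLinear x0
    have sw : ∀ u v w : Pt, ori v u w = - ori u v w := fun u v w => by simp only [ori]; ring
    change 0 < ori v0 v1 (P b) at h1
    change 0 < ori v1 v2 (P b) at h2
    change 0 < ori v2 v3 (P b) at h3
    have hmem : P b ∈ {z : Pt | z.1 < x0} := by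
      rcases le_or_gt (ori a v1 (P b)) 0 with c1 | c1
      · exact tri_mem hconv (C.hA _ C.ma) (C.hA _ C.m0) (C.hA _ C.m1) h1.le
          (by rw [sw]; linarith) hl C.a01
      · rcases le_or_gt (ori a v2 (P b)) 0 with c2 | c2
        · exact tri_mem hconv (C.hA _ C.ma) (C.hA _ C.m1) (C.hA _ C.m2) h2.le
            (by rw [sw]; linarith) c1.le C.a12
        · exact tri_mem hconv (C.hA _ C.ma) (C.hA _ C.m2) (C.hA _ C.m3) h3.le
            (by rw [rr]; exact hr) c2.le C.a23
    have hmem2 : (P b).1 < x0 := hmem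
    linarith

theorem krun_false {N : ℕ} {P : ℕ → Pt} (H : KHyp N P) {cs : List ℕ} {l : List (ℕ × ℕ × ℕ)}
    (hrun : krun N cs [kaddAll 0 l] = true)
    (hl : ∀ x ∈ l, (x.1 < 10 ∧ x.2.1 < 10 ∧ x.2.2 < 10) ∧
      0 < ori (P x.1) (P x.2.1) (P x.2.2)) : False :=
  krun_sound H cs _ hrun ⟨_, by simp, KGood_kaddAll l hl 0 (KGood_zero P)⟩

/-- Enumerate a set of `B`-points in the cone around `v0`. -/
theorem coneData_enum {x0 : ℝ} {A B : Finset Pt} {a v0 v1 v2 v3 x : Pt}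
    (C : ConeData x0 A B a v0 v1 v2 v3 x) {D : Finset Pt} (hD : D ⊆ B)
    (hDl : ∀ z ∈ D, 0 < ori a v0 z) :
    ∃ g : ℕ → Pt, (∀ k < D.card, g k ∈ D) ∧
      (∀ i j, i < j → j < D.card → 0 < ori v0 (g i) (g j)) ∧ ∀ z ∈ D, ∃ k < D.card, z = g k := by
  have hne : ∀ z ∈ D, v0 ≠ z := by
    rintro z hz rfl
    have h1 := C.hA _ C.m0
    have h2 := C.hB _ (hD hz)
    linarith
  obtain ⟨f, h1, h2, h3⟩ := exists_sorted_angular D v0 (-(v0.2 - a.2)) (v0.1 - a.1) (by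
    intro z hz
    have h := hDl z hz
    have e : ori a v0 z = (-(v0.2 - a.2)) * (z.1 - v0.1) + (v0.1 - a.1) * (z.2 - v0.2) := by
      simp only [ori]; ring
    linarith) (by
    intro z hz w hw hzw
    exact C.hgen.ori_ne (Finset.mem_union_left _ C.m0) (Finset.mem_union_right _ (hD hz))
      (Finset.mem_union_right _ (hD hw)) (hne z hz) (hne w hw) hzw)
  refine ⟨fun k => if h : k < D.card then f ⟨k, h⟩ else a, ?_, ?_, ?_⟩
  · intro k hk
    simp only [hk, dif_pos]; exact h1 _
  · intro i j hij hj
    have hi : i < D.card := hij.trans hj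
    simp only [hi, hj, dif_pos]
    exact h2 _ _ hij
  · intro z hz
    obtain ⟨i, hi⟩ := h3 z hz
    exact ⟨i, i.2, by simp [hi]⟩

theorem coneData_five {x0 : ℝ} {A B : Finset Pt} {a v0 v1 v2 v3 x : Pt}
    (C : ConeData x0 A B a v0 v1 v2 v3 x) {D : Finset Pt} (hD : D ⊆ B) (hcard : D.card = 5)
    (hDl : ∀ z ∈ D, 0 < ori a v0 z) (hDr : ∀ z ∈ D, 0 < ori a z v3)
    (hDc : ∀ z ∈ B, 0 ≤ ori a v0 z → 0 ≤ ori a z v3 → z ∉ D → ∀ d ∈ D, d.1 < z.1) : False := by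
  obtain ⟨g, g1, g2, g3⟩ := coneData_enum C hD hDl
  rw [hcard] at g1 g2 g3
  have H := coneData_hyp C (n := 5) le_rfl (fun k hk => hD (g1 k hk)) (fun k hk => hDl _ (g1 k hk))
    (fun k hk => hDr _ (g1 k hk)) g2 (fun z hz hl hr hzg k hk => hDc z hz hl hr (by
      intro hzD
      obtain ⟨k, hk, h⟩ := g3 z hzD
      exact hzg k hk h) _ (g1 k hk))
  refine krun_false H certC_ok ?_
  have l := fun k hk => hDl _ (g1 k hk)
  have r := fun k hk => hDr _ (g1 k hk)
  obtain ⟨_, _, _, _, _, _, _, _, _, _, b1, b2, b3, b4, b5, b6, b7, b8, b9, b10, _, _⟩ := C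
  simp only [kbase, kfour, kfive, List.cons_append, List.nil_append, List.forall_mem_cons, kcfg]
  norm_num [*]

theorem coneData_four {x0 : ℝ} {A B : Finset Pt} {a v0 v1 v2 v3 x : Pt}
    (C : ConeData x0 A B a v0 v1 v2 v3 x) {D : Finset Pt} (hD : D ⊆ B) (hcard : D.card = 4)
    (hDl : ∀ z ∈ D, 0 < ori a v0 z) (hDr : ∀ z ∈ D, 0 < ori a z v3)
    (hDc : ∀ z ∈ B, 0 ≤ ori a v0 z → 0 ≤ ori a z v3 → z ∉ D → ∀ d ∈ D, d.1 < z.1)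
    (hw : (∀ z ∈ D, 0 < ori a v2 z) ∨ (∀ z ∈ D, 0 < ori a v1 z ∧ 0 < ori a z v2) ∨
      (∀ z ∈ D, 0 < ori a z v1)) : False := by
  obtain ⟨g, g1, g2, g3⟩ := coneData_enum C hD hDl
  rw [hcard] at g1 g2 g3
  have H := coneData_hyp C (n := 4) (by norm_num) (fun k hk => hD (g1 k hk))
    (fun k hk => hDl _ (g1 k hk))
    (fun k hk => hDr _ (g1 k hk)) g2 (fun z hz hl hr hzg k hk => hDc z hz hl hr (by
      intro hzD
      obtain ⟨k, hk, h⟩ := g3 z hzD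
      exact hzg k hk h) _ (g1 k hk))
  have l := fun k hk => hDl _ (g1 k hk)
  have r := fun k hk => hDr _ (g1 k hk)
  obtain ⟨_, _, _, _, _, _, _, _, _, _, b1, b2, b3, b4, b5, b6, b7, b8, b9, b10, _, _⟩ := C
  rcases hw with hw | hw | hw
  · refine krun_false H certW0_ok ?_
    have w := fun k hk => hw _ (g1 k hk)
    simp only [kbase, kfour, kw0, List.cons_append, List.nil_append, List.forall_mem_cons, kcfg]
    norm_num [*]
  · refine krun_false H certW1_ok ?_
    have w := fun k hk => (hw _ (g1 k hk)).1
    have w' := fun k hk => (hw _ (g1 k hk)).2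
    simp only [kbase, kfour, kw1, List.cons_append, List.nil_append, List.forall_mem_cons, kcfg]
    norm_num [*]
  · refine krun_false H certW2_ok ?_
    have w := fun k hk => hw _ (g1 k hk)
    simp only [kbase, kfour, kw2, List.cons_append, List.nil_append, List.forall_mem_cons, kcfg]
    norm_num [*]

/-- In each of the three wedges of the cone there are at most three points of `B`. -/
theorem coneData_le {x0 : ℝ} {A B : Finset Pt} {a v0 v1 v2 v3 x : Pt}
    (C : ConeData x0 A B a v0 v1 v2 v3 x) {E : Finset Pt} (hE : E ⊆ B)
    (hEl : ∀ z ∈ E, 0 < ori a v0 z) (hEr : ∀ z ∈ E, 0 < ori a z v3)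
    (hw : (∀ z ∈ E, 0 < ori a v2 z) ∨ (∀ z ∈ E, 0 < ori a v1 z ∧ 0 < ori a z v2) ∨
      (∀ z ∈ E, 0 < ori a z v1)) : E.card ≤ 3 := by
  classical
  by_contra hcon
  set F := B.filter (fun z => 0 < ori a v0 z ∧ 0 < ori a z v3) with hF
  have hEF : E ⊆ F := fun z hz => Finset.mem_filter.mpr ⟨hE hz, hEl z hz, hEr z hz⟩
  have hcl : ∀ z ∈ B, 0 ≤ ori a v0 z → 0 ≤ ori a z v3 → z ∈ F := by
    intro z hz h1 h2
    have hzA : z ∉ A := fun h => by have := C.hA z h; have := C.hB z hz; linarith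
    have nz : ∀ v ∈ A, v ≠ z := fun v hv h => hzA (h ▸ hv)
    have mz : z ∈ (↑(A ∪ B) : Set Pt) := Finset.mem_union_right _ hz
    have mA : ∀ v ∈ A, v ∈ (↑(A ∪ B) : Set Pt) := fun v hv => Finset.mem_union_left _ hv
    refine Finset.mem_filter.mpr ⟨hz, lt_of_le_of_ne h1 (Ne.symm ?_), lt_of_le_of_ne h2 (Ne.symm ?_)⟩
    · exact C.hgen.ori_ne (mA _ C.ma) (mA _ C.m0) mz (ori_pos_ne C.a01).1 (nz _ C.ma) (nz _ C.m0)
    · exact C.hgen.ori_ne (mA _ C.ma) mz (mA _ C.m3) (nz _ C.ma) (ori_pos_ne C.a03).2.1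
        (nz _ C.m3).symm
  have hFcard := Finset.card_le_card hEF
  rcases Nat.lt_or_ge F.card 5 with h5 | h5
  · have hEF' : E = F := Finset.eq_of_subset_of_card_le hEF (by omega)
    refine coneData_four C hE (by omega) hEl hEr ?_ hw
    intro z hz h1 h2 hzE
    exact absurd (hEF' ▸ hcl z hz h1 h2) hzE
  · have hinj : Set.InjOn (Prod.fst : Pt → ℝ) (↑F : Set Pt) := by
      intro u hu v hv h
      exact C.hx (Finset.mem_union_right _ (Finset.mem_filter.mp hu).1)
        (Finset.mem_union_right _ (Finset.mem_filter.mp hv).1) h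
    obtain ⟨f, f1, f2, f3⟩ := exists_sorted F Prod.fst hinj
    have finj : Function.Injective f := by
      intro i j hij
      by_contra hne
      rcases lt_or_gt_of_ne hne with h | h
      · have := f2 _ _ h; rw [hij] at this; exact lt_irrefl _ this
      · have := f2 _ _ h; rw [hij] at this; exact lt_irrefl _ this
    set D : Finset Pt := (Finset.univ : Finset (Fin 5)).image (fun i => f (Fin.castLE h5 i)) with hD
    have hDF : ∀ z ∈ D, z ∈ F := by
      intro z hz
      obtain ⟨i, _, rfl⟩ := Finset.mem_image.mp hz
      exact f1 _
    refine coneData_five C (D := D) (fun z hz => (Finset.mem_filter.mp (hDF z hz)).1) ?_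
      (fun z hz => (Finset.mem_filter.mp (hDF z hz)).2.1)
      (fun z hz => (Finset.mem_filter.mp (hDF z hz)).2.2) ?_
    · rw [hD, Finset.card_image_of_injective]
      · simp
      · intro i j hij
        exact Fin.castLE_injective h5 (finj hij)
    · intro z hz h1 h2 hzD d hd
      obtain ⟨j, rfl⟩ := f3 z (hcl z hz h1 h2)
      obtain ⟨i, _, rfl⟩ := Finset.mem_image.mp hd
      apply f2
      by_contra hlt
      apply hzD
      refine Finset.mem_image.mpr ⟨⟨j.1, ?_⟩, Finset.mem_univ _, ?_⟩
      · have h3 : j.1 ≤ i.1 := by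
          have := not_lt.mp hlt
          exact this
        omega
      · rfl

/-! ### Finding the cone -/

theorem cone_right {a u w z v : Pt} (h1 : 0 < ori a u z) (h2 : 0 < ori a z w)
    (h3 : 0 < ori a u w) (h4 : 0 ≤ ori a w v) (h5 : 0 < ori a u v) : 0 < ori a z v := by
  have g := gp_identity a u z w v
  rw [ori_swap a z v] at g
  have e1 := mul_nonneg h1.le h4
  have e2 := mul_pos h5 h2
  have e3 : 0 < ori a u w * ori a z v := by linarith
  exact (pos_iff_pos_of_mul_pos e3).mp h3

theorem cone_left {a u w z v : Pt} (h1 : 0 < ori a u z) (h2 : 0 < ori a z w)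
    (h3 : 0 < ori a u w) (h4 : 0 ≤ ori a v u) (h5 : 0 < ori a v w) : 0 < ori a v z := by
  have g := gp_identity a v u z w
  rw [ori_swap a u w] at g
  have e1 := mul_nonneg h4 h2.le
  have e2 := mul_pos h5 h1
  have e3 : 0 < ori a u w * ori a v z := by linarith
  exact (pos_iff_pos_of_mul_pos e3).mp h3

/-- A vertex of a set in convex position can be strictly separated from the others. -/
theorem exists_side {S : Finset Pt} {a : Pt} (h : a ∉ convexHull ℝ (↑S : Set Pt)) :
    ∃ α β : ℝ, ∀ z ∈ S, 0 < α * (z.1 - a.1) + β * (z.2 - a.2) := by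
  have hcl : IsClosed (convexHull ℝ (↑S : Set Pt)) :=
    (S.finite_toSet.isCompact_convexHull (𝕜 := ℝ)).isClosed
  obtain ⟨f, u, h1, h2⟩ := geometric_hahn_banach_point_closed (convex_convexHull ℝ _) hcl h
  have hlin : ∀ z : Pt, f z = z.1 * f (1, 0) + z.2 * f (0, 1) := by
    intro z
    have : z = z.1 • ((1, 0) : Pt) + z.2 • ((0, 1) : Pt) := by ext <;> simp
    conv_lhs => rw [this]
    rw [map_add, map_smul, map_smul, smul_eq_mul, smul_eq_mul]
  refine ⟨f (1, 0), f (0, 1), fun z hz => ?_⟩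
  have h3 := h2 z (subset_convexHull ℝ _ hz)
  rw [hlin] at h1 h3
  linarith

theorem wedge_bound {x0 : ℝ} {A B : Finset Pt} {a x u w : Pt}
    (hA : ∀ p ∈ A, p.1 < x0) (hB : ∀ p ∈ B, x0 < p.1)
    (hgen : GenPos (↑(A ∪ B) : Set Pt)) (hx : Set.InjOn Prod.fst (↑(A ∪ B) : Set Pt))
    (hnh : ¬ ∃ H : Finset Pt, DividedFiveHole A B H) (hcard : 6 ≤ A.card)
    (ha : a ∈ A) (hxA : x ∈ A) (hxa : x ≠ a)
    (hconv : ConvexPos (↑(A.erase x) : Set Pt))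
    (hext : x ∉ convexHull ℝ ((↑(A ∪ B) : Set Pt) \ {x}))
    (hu : u ∈ A) (hua : u ≠ a) (hux : u ≠ x) (hw : w ∈ A) (hwa : w ≠ a) (hwx : w ≠ x)
    (huw : 0 < ori a u w)
    (hcons : ∀ z ∈ A, 0 < ori a u z → 0 < ori a z w → False)
    {E : Finset Pt} (hE : E ⊆ B) (hEl : ∀ z ∈ E, 0 < ori a u z) (hEr : ∀ z ∈ E, 0 < ori a z w) :
    E.card ≤ 3 := by
  classical
  set V := (A.erase x).erase a with hV
  have haA' : a ∈ A.erase x := Finset.mem_erase.mpr ⟨hxa.symm, ha⟩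
  have hVcard : V.card = A.card - 2 := by
    rw [hV, Finset.card_erase_of_mem haA', Finset.card_erase_of_mem hxA]; omega
  have hVmem : ∀ z, z ∈ V ↔ z ≠ a ∧ z ≠ x ∧ z ∈ A := by
    intro z; simp [hV]
  have hVA : ∀ z ∈ V, z ∈ (↑(A ∪ B) : Set Pt) := fun z hz =>
    Finset.mem_union_left _ ((hVmem z).mp hz).2.2
  have haC : a ∈ (↑(A ∪ B) : Set Pt) := Finset.mem_union_left _ ha
  obtain ⟨α, β, hside⟩ := exists_side (S := V) (a := a) (by
    have := hconv a haA'
    rwa [← Finset.coe_erase] at this)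
  obtain ⟨f, f1, f2, f3⟩ := exists_sorted_angular V a α β hside (by
    intro z hz z' hz' hne
    exact hgen.ori_ne haC (hVA z hz) (hVA z' hz') ((hVmem z).mp hz).1.symm
      ((hVmem z').mp hz').1.symm hne)
  -- natural number indexing
  obtain ⟨F, F1, F2, F3⟩ : ∃ F : ℕ → Pt, (∀ i < V.card, F i ∈ V) ∧
      (∀ i j, i < j → j < V.card → 0 < ori a (F i) (F j)) ∧ ∀ z ∈ V, ∃ i < V.card, F i = z := by
    refine ⟨fun k => if h : k < V.card then f ⟨k, h⟩ else a, ?_, ?_, ?_⟩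
    · intro k hk
      simp only [hk, dif_pos]; exact f1 _
    · intro i j hij hj
      have hi : i < V.card := hij.trans hj
      simp only [hi, hj, dif_pos]
      exact f2 _ _ hij
    · intro z hz
      obtain ⟨i, hi⟩ := f3 z hz
      exact ⟨i, i.2, by simp [hi]⟩
  clear f1 f2 f3
  clear f
  generalize hm : V.card = m at F1 F2 F3 hVcard
  have FA : ∀ i < m, F i ∈ A := fun i hi => ((hVmem _).mp (F1 i hi)).2.2
  have hm4 : 4 ≤ m := by omega
  have zz : ∀ u w : Pt, ori u w w = 0 := fun u w => by simp only [ori]; ring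
  have F4 : ∀ i j l, i < j → j < l → l < m → 0 < ori (F i) (F j) (F l) := by
    intro i j l hij hjl hl
    have h1 := F2 i j hij (hjl.trans hl)
    have h2 := F2 j l hjl hl
    have h3 := F2 i l (hij.trans hjl) hl
    have hFj := F1 j (hjl.trans hl)
    have hFi := F1 i (hij.trans (hjl.trans hl))
    have hFl := F1 l hl
    have hjne : F j ∈ (↑(A.erase x) : Set Pt) := (Finset.mem_erase.mp hFj).2
    by_contra hcon
    apply hconv (F j) hjne
    have hmem : ∀ z ∈ A.erase x, z ≠ F j →
        z ∈ convexHull ℝ ((↑(A.erase x) : Set Pt) \ {F j}) := fun z hz hne =>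
      subset_convexHull ℝ _ ⟨hz, hne⟩
    refine tri_mem (convex_convexHull ℝ _) (hmem a haA' (ori_pos_ne h1).2.1)
      (hmem (F i) (Finset.mem_erase.mp hFi).2 (ori_pos_ne h1).2.2)
      (hmem (F l) (Finset.mem_erase.mp hFl).2 (ori_pos_ne h2).2.2.symm) ?_ ?_ h1.le h3
    · rw [ori_swap]; linarith
    · rw [ori_rot]; exact h2.le
  obtain ⟨i, hi, rfl⟩ := F3 u ((hVmem u).mpr ⟨hua, hux, hu⟩)
  obtain ⟨j, hj, rfl⟩ := F3 w ((hVmem w).mpr ⟨hwa, hwx, hw⟩)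
  have hij : i < j := by
    by_contra hcon
    rcases Nat.lt_or_ge j i with h | h
    · have := F2 j i h hi
      rw [ori_swap] at this; linarith
    · have : i = j := by omega
      subst this
      rw [zz] at huw; exact lt_irrefl _ huw
  have hj1 : j = i + 1 := by
    by_contra hcon
    exact hcons (F (i + 1)) (FA _ (by omega)) (F2 _ _ (by omega) (by omega))
      (F2 _ _ (by omega) (by omega))
  subst hj1
  obtain ⟨k, hk, hik⟩ : ∃ k, k + 3 < m ∧ (i = k ∨ i = k + 1 ∨ i = k + 2) := by
    rcases Nat.lt_or_ge (i + 3) m with h | h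
    · exact ⟨i, h, Or.inl rfl⟩
    · exact ⟨m - 4, by omega, by omega⟩
  have C : ConeData x0 A B a (F k) (F (k + 1)) (F (k + 2)) (F (k + 3)) x :=
    { hA := hA, hB := hB, hgen := hgen, hx := hx, hnh := hnh, ma := ha
      m0 := FA _ (by omega), m1 := FA _ (by omega), m2 := FA _ (by omega), m3 := FA _ (by omega)
      a01 := F2 _ _ (by omega) (by omega), a02 := F2 _ _ (by omega) (by omega)
      a03 := F2 _ _ (by omega) (by omega), a12 := F2 _ _ (by omega) (by omega)
      a13 := F2 _ _ (by omega) (by omega), a23 := F2 _ _ (by omega) (by omega)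
      o012 := F4 _ _ _ (by omega) (by omega) (by omega)
      o013 := F4 _ _ _ (by omega) (by omega) (by omega)
      o023 := F4 _ _ _ (by omega) (by omega) (by omega)
      o123 := F4 _ _ _ (by omega) (by omega) (by omega)
      hcone := by
        intro z hz h1 h2
        by_cases hza : z = a
        · exact Or.inl hza
        by_cases hzx : z = x
        · exact Or.inr (Or.inr (Or.inr (Or.inr (Or.inr hzx))))
        obtain ⟨l, hl, rfl⟩ := F3 z ((hVmem z).mpr ⟨hza, hzx, hz⟩)
        have hl1 : k ≤ l := by
          by_contra hcon
          have := F2 l k (by omega) (by omega)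
          rw [ori_swap] at this; linarith
        have hl2 : l ≤ k + 3 := by
          by_contra hcon
          have := F2 (k + 3) l (by omega) (by omega)
          rw [ori_swap] at this; linarith
        have : l = k ∨ l = k + 1 ∨ l = k + 2 ∨ l = k + 3 := by omega
        rcases this with rfl | rfl | rfl | rfl <;> simp
      hext := hext }
  rcases hik with rfl | rfl | rfl
  · refine coneData_le C hE hEl (fun z hz => ?_) (Or.inr (Or.inr hEr))
    exact cone_right (hEl z hz) (hEr z hz) huw C.a13.le C.a03
  · refine coneData_le C hE (fun z hz => ?_) (fun z hz => ?_)
      (Or.inr (Or.inl fun z hz => ⟨hEl z hz, hEr z hz⟩))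
    · exact cone_left (hEl z hz) (hEr z hz) huw C.a01.le C.a02
    · exact cone_right (hEl z hz) (hEr z hz) huw C.a23.le C.a13
  · refine coneData_le C hE (fun z hz => ?_) hEr (Or.inl hEl)
    exact cone_left (hEl z hz) (hEr z hz) huw C.a02.le C.a03

theorem cross2_eq_ori (a p q : Pt) : cross2 (p - a) (q - a) = ori a p q := rfl

theorem ori_self_left (a p : Pt) : ori a p a = 0 := by simp only [ori]; ring

theorem ori_self_right (a p : Pt) : ori a p p = 0 := by simp only [ori]; ring

theorem lbl_ne {x0 : ℝ} {A : Finset Pt} (S : StarSetup x0 A) (hcard : 6 ≤ A.card) {k : ℕ}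
    (hk : k ∈ Finset.Icc 1 (A.card - 1)) : S.lbl (k - 1) ≠ S.lbl k := by
  intro h
  rw [Finset.mem_Icc] at hk
  obtain ⟨k0, -, hu⟩ := S.lbl_bij _ (S.lbl_mem k)
  have h1 := hu k ⟨Finset.mem_Icc.mpr hk, rfl⟩
  by_cases hk1 : k = 1
  · subst hk1
    have hp := S.lbl_periodic 0
    rw [zero_add] at hp
    have h2 := hu (A.card - 1) ⟨Finset.mem_Icc.mpr ⟨by omega, le_rfl⟩, hp.trans h⟩
    omega
  · have h2 := hu (k - 1) ⟨Finset.mem_Icc.mpr ⟨by omega, by omega⟩, h⟩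
    omega

theorem wedge_data {x0 : ℝ} {A : Finset Pt} (hgen : GenPos (↑A : Set Pt)) (S : StarSetup x0 A)
    (hcard : 6 ≤ A.card) {k : ℕ} (hk : k ∈ Finset.Icc 1 (A.card - 1)) :
    0 < ori S.aStar (S.lbl k) (S.lbl (k - 1)) ∧
    (∀ z, z ∈ Wedge S.aStar (S.lbl (k - 1)) (S.lbl k) ↔
      0 ≤ ori S.aStar (S.lbl k) z ∧ 0 ≤ ori S.aStar z (S.lbl (k - 1))) ∧
    ∀ z ∈ A, 0 < ori S.aStar (S.lbl k) z → 0 < ori S.aStar z (S.lbl (k - 1)) → False := by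
  have hne := lbl_ne S hcard hk
  have hcons := S.consec k hk
  have hp := Finset.mem_erase.mp (S.lbl_mem (k - 1))
  have hq := Finset.mem_erase.mp (S.lbl_mem k)
  have haA := S.aStar_mem
  have haI := S.aStar_interior
  generalize S.lbl (k - 1) = p at *
  generalize S.lbl k = q at *
  generalize S.aStar = a at *
  have h0 : ori a p q ≠ 0 := hgen.ori_ne haA hp.2 hq.2 hp.1.symm hq.1.symm hne
  have hle : ori a p q ≤ 0 := by
    by_contra hcon
    have hW : Wedge a p q = {z | ori a p z ≤ 0 ∨ 0 ≤ ori a q z} := by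
      unfold Wedge
      rw [if_neg (by rw [cross2_eq_ori]; exact hcon)]
      rfl
    refine not_interior_of_max (S := (↑A : Set Pt)) (α := p.2 - a.2) (β := -(p.1 - a.1)) (z := a)
      ?_ ?_ haI
    · by_contra hc
      push Not at hc
      apply hp.1
      ext
      · linarith [hc.2]
      · linarith [hc.1]
    · intro z hz
      have hz0 : 0 ≤ ori a p z := by
        by_contra hneg
        have : z ∈ ({a, p, q} : Set Pt) := hcons ⟨hz, by rw [hW]; exact Or.inl (by linarith)⟩
        rcases this with rfl | rfl | rfl
        · rw [ori_self_left] at hneg; exact hneg le_rfl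
        · rw [ori_self_right] at hneg; exact hneg le_rfl
        · linarith
      simp only [ori] at hz0
      linarith
  have hW : ∀ z, z ∈ Wedge a p q ↔ 0 ≤ ori a q z ∧ 0 ≤ ori a z p := by
    intro z
    unfold Wedge
    rw [if_pos (by rw [cross2_eq_ori]; exact hle)]
    simp only [Set.mem_ofPred_eq, cross2_eq_ori]
    rw [ori_swap a p z]
    constructor <;> rintro ⟨h1, h2⟩ <;> constructor <;> linarith
  refine ⟨?_, hW, ?_⟩
  · rw [ori_swap]
    have := lt_of_le_of_ne hle h0
    linarith
  · intro z hz h1 h2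
    have : z ∈ ({a, p, q} : Set Pt) := hcons ⟨hz, (hW z).mpr ⟨h1.le, h2.le⟩⟩
    rcases this with rfl | rfl | rfl
    · rw [ori_self_left] at h1; exact lt_irrefl _ h1
    · rw [ori_self_right] at h2; exact lt_irrefl _ h2
    · rw [ori_self_right] at h1; exact lt_irrefl _ h1

theorem lbl_right {x0 : ℝ} {A : Finset Pt} (hA : ∀ p ∈ A, p.1 < x0)
    (hgen : GenPos (↑A : Set Pt)) (hx : Set.InjOn Prod.fst (↑A : Set Pt)) (S : StarSetup x0 A)
    (hcard : 6 ≤ A.card) {k : ℕ} (hk : 1 ≤ k) (hkt : k + 1 ≤ S.t) :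
    S.aStar.1 < (S.lbl k).1 := by
  have htle := S.t_le
  have hk1 : k ∈ Finset.Icc 1 (A.card - 1) := Finset.mem_Icc.mpr ⟨hk, by omega⟩
  have hk2 : k + 1 ∈ Finset.Icc 1 (A.card - 1) := Finset.mem_Icc.mpr ⟨by omega, by omega⟩
  obtain ⟨z1, hz1⟩ := (S.inter_iff k hk1).mpr (by omega)
  obtain ⟨z2, hz2⟩ := (S.inter_iff (k + 1) hk2).mpr hkt
  have hord := S.ordered k (Finset.mem_Icc.mpr ⟨hk, by omega⟩) (k + 1)
    (Finset.mem_Icc.mpr ⟨by omega, hkt⟩) (by omega) z1 hz1 z2 hz2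
  obtain ⟨d1, w1, -⟩ := wedge_data hgen S hcard hk1
  obtain ⟨d2, w2, -⟩ := wedge_data hgen S hcard hk2
  have g1 := (w1 z1).mp hz1.1
  have g2 := (w2 z2).mp hz2.1
  have e1 : z1.1 = x0 := hz1.2
  have e2 : z2.1 = x0 := hz2.2
  simp only [Nat.add_sub_cancel] at g2 d2
  have hv := Finset.mem_erase.mp (S.lbl_mem k)
  have hne : (S.lbl k).1 ≠ S.aStar.1 := fun h => hv.1 (hx hv.2 S.aStar_mem h)
  have ha0 := hA _ S.aStar_mem
  generalize S.lbl (k - 1) = p at *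
  generalize S.lbl k = v at *
  generalize S.lbl (k + 1) = r at *
  generalize S.aStar = a at *
  by_contra hcon
  have hlt : v.1 - a.1 < 0 := by
    have := lt_of_le_of_ne (not_lt.mp hcon) hne
    linarith
  have h1 := g1.1
  have h1' := g1.2
  have h2 := g2.2
  simp only [ori] at h1 h1' h2 d1
  rw [e1] at h1 h1'
  rw [e2] at h2
  have hm : (v.1 - a.1) * (z1.2 - a.2) = (v.2 - a.2) * (x0 - a.1) := by
    nlinarith
  have hprod : (v.1 - a.1) * ((x0 - a.1) * (p.2 - a.2) - (z1.2 - a.2) * (p.1 - a.1)) =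
      (x0 - a.1) * ((v.1 - a.1) * (p.2 - a.2) - (v.2 - a.2) * (p.1 - a.1)) := by
    linear_combination (-(p.1 - a.1)) * hm
  have hpos := mul_pos (sub_pos.mpr ha0) d1
  have hneg := mul_nonpos_of_nonpos_of_nonneg hlt.le h1'
  linarith

theorem w_le_of_boundary {x0 : ℝ} {A B : Finset Pt}
    (hA : ∀ p ∈ A, p.1 < x0) (hB : ∀ p ∈ B, x0 < p.1)
    (hgen : GenPos (↑(A ∪ B) : Set Pt))
    (hx : Set.InjOn Prod.fst (↑(A ∪ B) : Set Pt))
    (S : StarSetup x0 A) (hcrit : LCritical A B)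
    (hnh : ¬ ∃ H : Finset Pt, DividedFiveHole A B H)
    (hcard : 6 ≤ A.card) {k : ℕ} (hk : k ∈ Finset.Icc 1 (A.card - 1)) {x : Pt} (hxA : x ∈ A)
    (hxb : OnHullBoundary (A ∪ B) x) (h1 : x ≠ S.lbl (k - 1)) (h2 : x ≠ S.lbl k) :
    S.w B k ≤ 3 := by
  classical
  have hAC : (↑A : Set Pt) ⊆ (↑(A ∪ B) : Set Pt) := fun z hz => Finset.mem_union_left _ hz
  have hgenA : GenPos (↑A : Set Pt) := fun p hp q hq r hr =>
    hgen p (hAC hp) q (hAC hq) r (hAC hr)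
  obtain ⟨d, hW, hcons⟩ := wedge_data hgenA S hcard hk
  have haI : S.aStar ∈ interior (convexHull ℝ (↑(A ∪ B) : Set Pt)) :=
    interior_mono (convexHull_mono hAC) S.aStar_interior
  have hxa : x ≠ S.aStar := by
    rintro rfl
    exact hxb.2 haI
  have hBx : B.erase x = B := Finset.erase_eq_of_notMem fun h => by
    linarith [hA x hxA, hB x h]
  have hconv : ConvexPos (↑(A.erase x) : Set Pt) := by
    rcases hcrit.2.2 x (Finset.mem_union_left _ hxA) hxb with h | h
    · exact h
    · rw [hBx] at h
      exact absurd h hcrit.2.1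
  have hext := extreme_of_onHull hgen (Finset.mem_union_left _ hxA) ⟨_, haI⟩ hxb
  have hp := Finset.mem_erase.mp (S.lbl_mem (k - 1))
  have hq := Finset.mem_erase.mp (S.lbl_mem k)
  have hcount : S.w B k = (B.filter fun z => z ∈ S.W k).card := by
    unfold StarSetup.w
    rw [← Set.ncard_coe_finset]
    congr 1
    ext z
    simp
  rw [hcount]
  have hneB : ∀ u ∈ A, ∀ z ∈ B, u ≠ z := by
    rintro u hu z hz rfl
    linarith [hA u hu, hB u hz]
  refine wedge_bound hA hB hgen hx hnh hcard S.aStar_mem hxA hxa hconv hext hq.2 hq.1 h2.symm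
    hp.2 hp.1 h1.symm d hcons (Finset.filter_subset _ _) ?_ ?_
  · intro z hz
    obtain ⟨hzB, hzW⟩ := Finset.mem_filter.mp hz
    refine lt_of_le_of_ne ((hW z).mp hzW).1 (Ne.symm ?_)
    exact hgen.ori_ne (hAC S.aStar_mem) (hAC hq.2) (Finset.mem_union_right _ hzB) hq.1.symm
      (hneB _ S.aStar_mem _ hzB) (hneB _ hq.2 _ hzB)
  · intro z hz
    obtain ⟨hzB, hzW⟩ := Finset.mem_filter.mp hz
    refine lt_of_le_of_ne ((hW z).mp hzW).2 (Ne.symm ?_)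
    exact hgen.ori_ne (hAC S.aStar_mem) (Finset.mem_union_right _ hzB) (hAC hp.2)
      (hneB _ S.aStar_mem _ hzB) hp.1.symm (hneB _ hp.2 _ hzB).symm

/-- If `x` and `y` are the only points of `A` on the hull boundary, no two points of `C` lie
strictly on opposite sides of the line `xy`. -/
theorem two_boundary {x0 : ℝ} {A B : Finset Pt}
    (hA : ∀ p ∈ A, p.1 < x0) (hB : ∀ p ∈ B, x0 < p.1) {x y : Pt} (hxA : x ∈ A) (hyA : y ∈ A)
    (hxy : x.1 < y.1) (hyb : OnHullBoundary (A ∪ B) y)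
    (hall : ∀ p ∈ A, OnHullBoundary (A ∪ B) p → p = x ∨ p = y)
    {c d : Pt} (hc : c ∈ A ∪ B) (hd : d ∈ A ∪ B) (hcp : 0 < ori x y c) (hdn : ori x y d < 0) :
    False := by
  obtain ⟨z, hz, hzmax⟩ := (A ∪ B).exists_max_image (fun z => ori x y z) ⟨c, hc⟩
  obtain ⟨z', hz', hzmin⟩ := (A ∪ B).exists_min_image (fun z => ori x y z) ⟨c, hc⟩
  have pz : 0 < ori x y z := lt_of_lt_of_le hcp (hzmax c hc)
  have nz : ori x y z' < 0 := lt_of_le_of_lt (hzmin d hd) hdn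
  have bz : OnHullBoundary (A ∪ B) z := by
    refine onHull_of_max (α := -(y.2 - x.2)) (β := y.1 - x.1) (Or.inr (by linarith)) hz ?_
    intro w hw
    have := hzmax w hw
    simp only [ori] at this
    linarith
  have bz' : OnHullBoundary (A ∪ B) z' := by
    refine onHull_of_max (α := y.2 - x.2) (β := -(y.1 - x.1)) (Or.inr (by linarith)) hz' ?_
    intro w hw
    have := hzmin w hw
    simp only [ori] at this
    linarith
  have key : ∀ w ∈ A ∪ B, OnHullBoundary (A ∪ B) w → ori x y w ≠ 0 → x0 < w.1 := by
    intro w hw hb hne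
    rcases Finset.mem_union.mp hw with h | h
    · rcases hall w h hb with rfl | rfl
      · exact absurd (ori_self_left _ _) hne
      · exact absurd (ori_self_right _ _) hne
    · exact hB w h
  have fz := key z hz bz pz.ne'
  have fz' := key z' hz' bz' nz.ne
  have fy := hA y hyA
  have t1 : 0 < ori z x y := by rw [ori_rot]; exact pz
  have t2 : 0 < ori x z' y := by rw [ori_swap]; linarith
  have t3 : 0 < ori z' z y := by
    have hid : (y.1 - x.1) * ori z' z y =
        (z'.1 - y.1) * ori z x y + (z.1 - y.1) * ori x z' y := by
      simp only [ori]; ring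
    have : 0 < (y.1 - x.1) * ori z' z y := by
      rw [hid]
      have := mul_pos (show 0 < z'.1 - y.1 by linarith) t1
      have := mul_pos (show 0 < z.1 - y.1 by linarith) t2
      linarith
    exact (pos_iff_pos_of_mul_pos this).mp (by linarith)
  have hT : 0 < ori x z' z := by
    have : ori x z' z = ori z' z y + ori z x y + ori x z' y := by simp only [ori]; ring
    linarith
  have hopen : ∀ u v : Pt, IsOpen {b : Pt | 0 < ori u v b} := by
    intro u v
    refine isOpen_lt continuous_const ?_
    unfold ori
    fun_prop
  have hxC : x ∈ A ∪ B := Finset.mem_union_left _ hxA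
  apply hyb.2
  rw [mem_interior]
  refine ⟨{b | 0 < ori z' z b} ∩ ({b | 0 < ori z x b} ∩ {b | 0 < ori x z' b}), ?_,
    (hopen _ _).inter ((hopen _ _).inter (hopen _ _)), t3, t1, t2⟩
  rintro b ⟨b1, b2, b3⟩
  exact tri_mem (convex_convexHull ℝ _) (subset_convexHull ℝ _ hxC) (subset_convexHull ℝ _ hz')
    (subset_convexHull ℝ _ hz) (le_of_lt b1) (le_of_lt b2) (le_of_lt b3) hT

theorem w_le_of_two {x0 : ℝ} {A B : Finset Pt}
    (hA : ∀ p ∈ A, p.1 < x0) (hB : ∀ p ∈ B, x0 < p.1)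
    (hgen : GenPos (↑(A ∪ B) : Set Pt))
    (hx : Set.InjOn Prod.fst (↑(A ∪ B) : Set Pt))
    (S : StarSetup x0 A) (hcrit : LCritical A B)
    (hnh : ¬ ∃ H : Finset Pt, DividedFiveHole A B H)
    (hcard : 6 ≤ A.card) {k : ℕ} (hk : k ∈ Finset.Icc 1 (A.card - 1)) {x y : Pt}
    (hxy : x.1 < y.1) (hxA : x ∈ A) (hyA : y ∈ A)
    (hxb : OnHullBoundary (A ∪ B) x) (hyb : OnHullBoundary (A ∪ B) y)
    (hall : ∀ p ∈ A, OnHullBoundary (A ∪ B) p → p = x ∨ p = y) :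
    S.w B k ≤ 3 := by
  by_cases cx : x ≠ S.lbl (k - 1) ∧ x ≠ S.lbl k
  · exact w_le_of_boundary hA hB hgen hx S hcrit hnh hcard hk hxA hxb cx.1 cx.2
  by_cases cy : y ≠ S.lbl (k - 1) ∧ y ≠ S.lbl k
  · exact w_le_of_boundary hA hB hgen hx S hcrit hnh hcard hk hyA hyb cy.1 cy.2
  have hAC : (↑A : Set Pt) ⊆ (↑(A ∪ B) : Set Pt) := fun z hz => Finset.mem_union_left _ hz
  have hgenA : GenPos (↑A : Set Pt) := fun p hp q hq r hr =>
    hgen p (hAC hp) q (hAC hq) r (hAC hr)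
  obtain ⟨d, hW, -⟩ := wedge_data hgenA S hcard hk
  have hne : x ≠ y := by rintro rfl; exact lt_irrefl _ hxy
  have hp := Finset.mem_erase.mp (S.lbl_mem (k - 1))
  have hq := Finset.mem_erase.mp (S.lbl_mem k)
  suffices h : (↑B : Set Pt) ∩ S.W k = ∅ by
    unfold StarSetup.w
    rw [h, Set.ncard_empty]
    omega
  rw [Set.eq_empty_iff_forall_notMem]
  rintro b ⟨hbB, hbW⟩
  obtain ⟨b1, b2⟩ := (hW b).mp hbW
  have haA := S.aStar_mem
  generalize S.lbl (k - 1) = p at *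
  generalize S.lbl k = q at *
  generalize S.aStar = a at *
  have haC : a ∈ A ∪ B := Finset.mem_union_left _ haA
  have hbC : b ∈ A ∪ B := Finset.mem_union_right _ hbB
  have hb0 := hB b hbB
  have hneg : ori q p b < 0 := by
    by_contra hcon
    have hmem : b ∈ convexHull ℝ (↑A : Set Pt) := by
      refine tri_mem (convex_convexHull ℝ _) (subset_convexHull ℝ _ haA)
        (subset_convexHull ℝ _ hq.2) (subset_convexHull ℝ _ hp.2) (not_lt.mp hcon) ?_ b1 d
      rw [ori_rot]
      exact b2
    have := hull_fst_lt (fun z hz => hA z hz) hmem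
    linarith
  have hpos : 0 < ori q p a := by rw [← ori_rot]; exact d
  have hcase : (q = x ∧ p = y) ∨ (q = y ∧ p = x) := by
    by_cases e1 : x = p <;> by_cases e2 : x = q <;> by_cases e3 : y = p <;>
      by_cases e4 : y = q <;> simp_all
  have hrev : ∀ z, ori y x z = -ori x y z := fun z => by simp only [ori]; ring
  rcases hcase with ⟨rfl, rfl⟩ | ⟨rfl, rfl⟩
  · exact two_boundary hA hB hxA hyA hxy hyb hall haC hbC hpos hneg
  · rw [hrev] at hpos hneg
    exact two_boundary hA hB hxA hyA hxy hyb hall hbC haC (by linarith) (by linarith)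

/-- **Lemma 14.** Let `C = A ∪ B` be an `ℓ`-critical set with no `ℓ`-divided 5-hole
and `|A| ≥ 6`. Then `w_i ≤ 3` for every `1 < i < t`. Moreover, if exactly two points
of `A` lie on the boundary of the convex hull of `C`, then also `w_1 ≤ 3` and
`w_t ≤ 3`. -/
theorem wedges_at_most_three
    (x0 : ℝ) (A B : Finset Pt)
    (hA : ∀ p ∈ A, p.1 < x0) (hB : ∀ p ∈ B, x0 < p.1)
    (hBne : B.Nonempty)
    (hgen : GenPos (↑(A ∪ B) : Set Pt))
    (hx : Set.InjOn Prod.fst (↑(A ∪ B) : Set Pt))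
    (hAnc : ¬ ConvexPos (↑A : Set Pt))
    (S : StarSetup x0 A)
    (hcrit : LCritical A B)
    (hnh : ¬ ∃ H : Finset Pt, DividedFiveHole A B H)
    (hAcard : 6 ≤ A.card) :
    (∀ i : ℕ, 1 < i → i < S.t → S.w B i ≤ 3) ∧
      (Set.ncard {p : Pt | p ∈ A ∧ OnHullBoundary (A ∪ B) p} = 2 →
        S.w B 1 ≤ 3 ∧ S.w B S.t ≤ 3) := by
  classical
  have hAC : (↑A : Set Pt) ⊆ (↑(A ∪ B) : Set Pt) := fun z hz => Finset.mem_union_left _ hz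
  have hgenA : GenPos (↑A : Set Pt) := fun p hp q hq r hr =>
    hgen p (hAC hp) q (hAC hq) r (hAC hr)
  have hxA' : Set.InjOn Prod.fst (↑A : Set Pt) := hx.mono hAC
  have htle := S.t_le
  have htpos := S.t_pos
  constructor
  · intro i hi hit
    obtain ⟨x, hxA, hxmin⟩ := A.exists_min_image Prod.fst ⟨_, S.aStar_mem⟩
    have hxb : OnHullBoundary (A ∪ B) x := by
      refine onHull_of_max (α := -1) (β := 0) (Or.inl (by norm_num))
        (Finset.mem_union_left _ hxA) ?_
      intro w hw
      have : x.1 ≤ w.1 := by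
        rcases Finset.mem_union.mp hw with h | h
        · exact hxmin w h
        · linarith [hA x hxA, hB w h]
      linarith
    have hxa := hxmin _ S.aStar_mem
    have r1 := lbl_right hA hgenA hxA' S hAcard (k := i - 1) (by omega) (by omega)
    have r2 := lbl_right hA hgenA hxA' S hAcard (k := i) (by omega) (by omega)
    refine w_le_of_boundary hA hB hgen hx S hcrit hnh hAcard
      (Finset.mem_Icc.mpr ⟨by omega, by omega⟩) hxA hxb ?_ ?_
    · intro h
      rw [← h] at r1
      linarith
    · intro h
      rw [← h] at r2
      linarith
  · intro h2
    obtain ⟨x, y, hne, hset⟩ := Set.ncard_eq_two.mp h2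
    have hall : ∀ p, (p ∈ A ∧ OnHullBoundary (A ∪ B) p) ↔ p = x ∨ p = y := by
      intro p
      have := Set.ext_iff.mp hset p
      simpa using this
    obtain ⟨hxA, hxb⟩ := (hall x).mpr (Or.inl rfl)
    obtain ⟨hyA, hyb⟩ := (hall y).mpr (Or.inr rfl)
    have main : ∀ k ∈ Finset.Icc 1 (A.card - 1), S.w B k ≤ 3 := by
      intro k hk
      rcases lt_trichotomy x.1 y.1 with h | h | h
      · exact w_le_of_two hA hB hgen hx S hcrit hnh hAcard hk h hxA hyA hxb hyb
          (fun p hp hb => (hall p).mp ⟨hp, hb⟩)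
      · exact absurd (hx (hAC hxA) (hAC hyA) h) hne
      · exact w_le_of_two hA hB hgen hx S hcrit hnh hAcard hk h hyA hxA hyb hxb
          (fun p hp hb => ((hall p).mp ⟨hp, hb⟩).symm)
    exact ⟨main 1 (Finset.mem_Icc.mpr ⟨le_rfl, by omega⟩),
      main S.t (Finset.mem_Icc.mpr ⟨htpos, htle⟩)⟩

end
end

section
/- Let C = A ∪ B be an ℓ-critical set with |A| ≥ 5. Then at most two points of A lie on the boundary of the convex hull of C. -/
noncomputable section

/-- One reduction step of the Caratheodory argument which keeps a prescribed point `d`. -/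
theorem reduce_keep (T : Finset Pt) (d a : Pt) (hd : d ∈ T) (hT : 4 ≤ T.card)
    (ha : a ∈ convexHull ℝ (↑T : Set Pt)) :
    ∃ e ∈ T, e ≠ d ∧ a ∈ convexHull ℝ (↑(T.erase e) : Set Pt) := by
  obtain ⟨w, hw0, hw1, hwa⟩ := Finset.mem_convexHull'.1 ha
  have hfin : Module.finrank ℝ Pt + 1 < T.card := by
    have : Module.finrank ℝ Pt = 2 := by simp [Pt]
    omega
  have key : ∃ f : Pt → ℝ, ∑ e ∈ T, f e • e = 0 ∧ ∑ e ∈ T, f e = 0 ∧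
      (∃ x ∈ T, f x ≠ 0) ∧ f d ≤ 0 := by
    obtain ⟨f, h1, h2, h3⟩ :=
      Module.exists_nontrivial_relation_sum_zero_of_finrank_succ_lt_card hfin
    rcases le_total (f d) 0 with h | h
    · exact ⟨f, h1, h2, h3, h⟩
    · refine ⟨fun e => - f e, ?_, ?_, ?_, by simpa using h⟩
      · simp [neg_smul, Finset.sum_neg_distrib, h1]
      · simp [Finset.sum_neg_distrib, h2]
      · simpa using h3
  obtain ⟨f, h1, h2, h3, hfd⟩ := key
  obtain ⟨p, hp, hfp⟩ := Finset.exists_pos_of_sum_zero_of_exists_nonzero f h2 h3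
  obtain ⟨e, he, hmin⟩ := Finset.exists_min_image (T.filter fun x => 0 < f x)
    (fun x => w x / f x) ⟨p, by simp [hp, hfp]⟩
  rw [Finset.mem_filter] at he
  obtain ⟨heT, hfe⟩ := he
  refine ⟨e, heT, ?_, ?_⟩
  · rintro rfl
    exact absurd hfe (not_lt.2 hfd)
  set s := w e / f e with hs
  have hs0 : 0 ≤ s := div_nonneg (hw0 e heT) hfe.le
  have hse : w e - s * f e = 0 := by
    rw [hs]; field_simp; ring
  rw [Finset.mem_convexHull']
  refine ⟨fun x => w x - s * f x, ?_, ?_, ?_⟩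
  · intro x hx
    have hxT := Finset.mem_of_mem_erase hx
    rcases le_or_gt (f x) 0 with h | h
    · have := hw0 x hxT
      nlinarith [mul_nonneg hs0 (neg_nonneg.2 h)]
    · have := hmin x (by simp [hxT, h])
      have := (le_div_iff₀ h).1 this
      simpa using this
  · rw [Finset.sum_erase T (f := fun x => w x - s * f x) hse, Finset.sum_sub_distrib, ← Finset.mul_sum, h2, hw1]
    simp
  · rw [Finset.sum_erase]
    · simp only [sub_smul, mul_smul]
      rw [Finset.sum_sub_distrib, ← Finset.smul_sum, h1, hwa]
      simp
    · change (w e - s * f e) • e = 0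
      rw [hse, zero_smul]

/-- Planar Caratheodory theorem with a prescribed point `d`. -/
theorem carath_keep (n : ℕ) : ∀ (T : Finset Pt) (d a : Pt), T.card = n → d ∈ T →
    a ∈ convexHull ℝ (↑T : Set Pt) →
    ∃ T' ⊆ T, d ∈ T' ∧ T'.card ≤ 3 ∧ a ∈ convexHull ℝ (↑T' : Set Pt) := by
  induction n with
  | zero =>
    intro T d a h hd ha
    exact ⟨T, subset_rfl, hd, by omega, ha⟩
  | succ n ih =>
    intro T d a h hd ha
    by_cases hc : T.card ≤ 3
    · exact ⟨T, subset_rfl, hd, hc, ha⟩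
    · obtain ⟨e, he, hed, hea⟩ := reduce_keep T d a hd (by omega) ha
      obtain ⟨T', h1, h2, h3, h4⟩ := ih (T.erase e) d a
        (by rw [Finset.card_erase_of_mem he]; omega) (by simp [hd, hed.symm]) hea
      exact ⟨T', h1.trans (Finset.erase_subset _ _), h2, h3, h4⟩

/-- In general position, a point in the hull of the other points is interior. -/
theorem mem_interior_of_genPos (S : Set Pt) (hS : GenPos S) (a : Pt) (ha : a ∈ S)
    (hc : a ∈ convexHull ℝ (S \ {a})) : a ∈ interior (convexHull ℝ S) := by
  obtain ⟨ι, hι, z, w, hzS, hz, hw, hw1, hwa⟩ := eq_pos_convex_span_of_mem_convexHull hc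
  have hfr : Module.finrank ℝ Pt = 2 := by simp [Pt]
  have hcard : Fintype.card ι ≤ 3 := by
    have h1 := hz.card_le_finrank_succ
    have h2 := Submodule.finrank_le (vectorSpan ℝ (Set.range z))
    have h3 := h2.trans_eq hfr
    exact h1.trans (Nat.succ_le_succ h3)
  have hzm : ∀ i, z i ∈ S ∧ z i ≠ a := fun i => by
    have := hzS (Set.mem_range_self i)
    exact ⟨this.1, this.2⟩
  have hc3 : Fintype.card ι = 3 := by
    have hne : ¬ Fintype.card ι = 0 := by
      intro h
      have := Fintype.card_eq_zero_iff.1 h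
      simp at hw1
    have hn1 : ¬ Fintype.card ι = 1 := by
      intro h
      obtain ⟨i, hi⟩ := Fintype.card_eq_one_iff.1 h
      have hu : (Finset.univ : Finset ι) = {i} := by
        ext j; simp [hi j]
      rw [hu, Finset.sum_singleton] at hw1 hwa
      rw [hw1, one_smul] at hwa
      exact (hzm i).2 hwa
    have hn2 : ¬ Fintype.card ι = 2 := by
      intro h
      classical
      rw [← Finset.card_univ] at h
      obtain ⟨i, j, hij, hu⟩ := Finset.card_eq_two.1 h
      rw [hu, Finset.sum_pair hij] at hw1 hwa
      have hseg : a ∈ segment ℝ (z i) (z j) :=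
        ⟨w i, w j, (hw i).le, (hw j).le, hw1, hwa⟩
      have hcol := (mem_segment_iff_wbtw.1 hseg).collinear
      exact hS _ (hzm i).1 _ ha _ (hzm j).1 (hzm i).2 (hz.injective.ne hij)
        (hzm j).2.symm hcol
    omega
  have htop : affineSpan ℝ (Set.range z) = ⊤ := by
    rw [hz.affineSpan_eq_top_iff_card_eq_finrank_add_one, hc3, hfr]
  let b : AffineBasis ι ℝ Pt := ⟨z, hz, htop⟩
  have hcomb : Finset.univ.affineCombination ℝ b w = a := by
    rw [Finset.affineCombination_eq_linear_combination _ _ _ hw1]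
    exact hwa
  have hint : a ∈ interior (convexHull ℝ (Set.range b)) := by
    rw [b.interior_convexHull]
    intro i
    rw [← hcomb, b.coord_apply_combination_of_mem (Finset.mem_univ i) hw1]
    exact hw i
  exact interior_mono (convexHull_mono (hzS.trans Set.sdiff_subset)) hint

/-- **Lemma 4(i).** Let `C = A ∪ B` be an `ℓ`-critical set with `|A| ≥ 5`. Then at most
two points of `A` lie on the boundary of the convex hull of `C`. -/
theorem critical_at_most_two_extremal
    (v : Pt) (hv : v ≠ 0) (c : ℝ) (A B : Finset Pt)
    (hA : ∀ p ∈ A, dotp v p < c) (hB : ∀ p ∈ B, c < dotp v p)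
    (hAne : A.Nonempty) (hBne : B.Nonempty)
    (hgen : GenPos (↑(A ∪ B) : Set Pt))
    (hcrit : LCritical A B)
    (hAcard : 5 ≤ A.card) :
    Set.ncard {p : Pt | p ∈ A ∧ OnHullBoundary (A ∪ B) p} ≤ 2 := by
  classical
  obtain ⟨hAn, hBn, hext⟩ := hcrit
  by_contra hlt
  push Not at hlt
  have hset : {p : Pt | p ∈ A ∧ OnHullBoundary (A ∪ B) p} =
      ↑(A.filter fun p => OnHullBoundary (A ∪ B) p) := by
    ext p; simp
  rw [hset, Set.ncard_coe_finset, Finset.two_lt_card] at hlt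
  obtain ⟨x, hx, y, hy, z, hz, hxy, hxz, hyz⟩ := hlt
  unfold ConvexPos at hAn
  push Not at hAn
  obtain ⟨a, haA, ha⟩ := hAn
  have haint : a ∈ interior (convexHull ℝ (↑(A ∪ B) : Set Pt)) := by
    refine mem_interior_of_genPos _ hgen a (by simpa using Or.inl haA) ?_
    refine convexHull_mono ?_ ha
    exact Set.sdiff_subset_sdiff_left (by simp)
  obtain ⟨d, hdA, hd⟩ : ∃ d, d ∈ A ∧ d ∉ ({a, x, y, z} : Finset Pt) := by
    apply Finset.exists_mem_notMem_of_card_lt_card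
    exact lt_of_le_of_lt Finset.card_le_four (by omega)
  simp only [Finset.mem_insert, Finset.mem_singleton, not_or] at hd
  obtain ⟨hda, hdx, hdy, hdz⟩ := hd
  obtain ⟨T, hTA, hdT, hTc, haT⟩ := carath_keep _ (A.erase a) d a rfl
    (by simp [hda, hdA]) (by simpa using ha)
  have hmem : ∀ u ∈ A.filter fun p => OnHullBoundary (A ∪ B) p, u ∈ T := by
    intro u hu
    rw [Finset.mem_filter] at hu
    obtain ⟨huA, hub⟩ := hu
    have hua : u ≠ a := by
      rintro rfl
      exact hub.2 haint
    have huB : u ∉ B := fun h => absurd (hA u huA) (not_lt.2 (hB u h).le)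
    have hconv : ConvexPos (↑(A.erase u) : Set Pt) := by
      rcases hext u (Finset.mem_union_left _ huA) hub with h | h
      · exact h
      · rw [Finset.erase_eq_of_notMem huB] at h
        exact absurd h hBn
    by_contra huT
    refine hconv a (by simp [haA, hua.symm]) (convexHull_mono ?_ haT)
    intro t ht
    have h1 := Finset.mem_erase.1 (hTA ht)
    have h2 : t ≠ u := by
      rintro rfl
      exact huT ht
    simp [h1.1, h1.2, h2]
  have h4 : 3 < T.card := by
    rw [Finset.three_lt_card_iff]
    exact ⟨d, x, y, z, hdT, hmem x hx, hmem y hy, hmem z hz, hdx, hdy, hdz, hxy, hxz, hyz⟩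
  omega

end
end

section
/- Let C = A ∪ B be an ℓ-critical set such that exactly two points a and a' of A lie on the boundary of the convex hull of C. Then A has exactly one point a* in the interior of the convex hull of A, and every point of A \ {a, a'} lies in the convex region bounded by the lines through a* and a and through a* and a' that contains neither a nor a' on its boundary. -/
noncomputable section

lemma aux_comb (S : Set Pt) (x p q r : Pt) (k l m : ℝ) (hk : 0 ≤ k) (hl : 0 ≤ l) (hm : 0 ≤ m)
    (hs : 0 < k + l + m) (hp : p ∈ S) (hq : q ∈ S) (hr : r ∈ S)
    (h1 : k * (p.1 - x.1) + l * (q.1 - x.1) + m * (r.1 - x.1) = 0)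
    (h2 : k * (p.2 - x.2) + l * (q.2 - x.2) + m * (r.2 - x.2) = 0) :
    x ∈ convexHull ℝ S := by
  have hc := convex_convexHull ℝ S
  have key : ∑ i : Fin 3, (![k, l, m] i / (k + l + m)) • (![p, q, r] i) ∈ convexHull ℝ S := by
    apply hc.sum_mem
    · intro i _
      fin_cases i <;> simp <;> positivity
    · simp [Fin.sum_univ_three]; field_simp
    · intro i _
      apply subset_convexHull
      fin_cases i <;> simp [hp, hq, hr]
  convert key using 1
  ext
  · simp [Fin.sum_univ_three]; field_simp; linarith
  · simp [Fin.sum_univ_three]; field_simp; linarith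

lemma aux_coll (x p q : Pt) (hp : p ≠ x) (h : cross2 (p - x) (q - x) = 0) :
    Collinear ℝ ({x, p, q} : Set Pt) := by
  rw [collinear_iff_of_mem (p₀ := x) (by simp)]
  refine ⟨p - x, ?_⟩
  have hn : 0 < (p.1 - x.1) ^ 2 + (p.2 - x.2) ^ 2 := by
    by_contra hcon
    apply hp
    have h1 : p.1 - x.1 = 0 := by nlinarith [sq_nonneg (p.1 - x.1), sq_nonneg (p.2 - x.2)]
    have h2 : p.2 - x.2 = 0 := by nlinarith [sq_nonneg (p.1 - x.1), sq_nonneg (p.2 - x.2)]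
    ext <;> linarith
  simp only [cross2, Prod.fst_sub, Prod.snd_sub] at h
  intro y hy
  simp only [Set.mem_insert_iff, Set.mem_singleton_iff] at hy
  rcases hy with rfl | rfl | rfl
  · exact ⟨0, by simp⟩
  · exact ⟨1, by simp⟩
  · refine ⟨((p.1 - x.1) * (y.1 - x.1) + (p.2 - x.2) * (y.2 - x.2)) /
      ((p.1 - x.1) ^ 2 + (p.2 - x.2) ^ 2), ?_⟩
    ext
    · simp; field_simp; linear_combination (-(p.2 - x.2)) * h
    · simp; field_simp; linear_combination ((p.1 - x.1)) * h

lemma aux_cross_ne {P : Set Pt} (hg : GenPos P) {x p q : Pt} (hx : x ∈ P) (hp : p ∈ P)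
    (hq : q ∈ P) (h1 : p ≠ x) (h2 : q ≠ x) (h3 : p ≠ q) : cross2 (p - x) (q - x) ≠ 0 :=
  fun h => hg x hx p hp q hq h1.symm h2.symm h3 (aux_coll x p q h1 h)

/-- A point in the hull of the others lies strictly inside a triangle. -/
lemma aux_tri {A : Set Pt} (hg : GenPos A) {x : Pt} (hx : x ∈ A)
    (h : x ∈ convexHull ℝ (A \ {x})) :
    ∃ p ∈ A \ {x}, ∃ q ∈ A \ {x}, ∃ r ∈ A \ {x}, p ≠ q ∧ p ≠ r ∧ q ≠ r ∧
      ∃ k l m : ℝ, 0 < k ∧ 0 < l ∧ 0 < m ∧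
        k * (p.1 - x.1) + l * (q.1 - x.1) + m * (r.1 - x.1) = 0 ∧
        k * (p.2 - x.2) + l * (q.2 - x.2) + m * (r.2 - x.2) = 0 := by
  obtain ⟨ι, _, z, w, hz, haff, hw, hs, hsum⟩ := eq_pos_convex_span_of_mem_convexHull h
  have hcard : Fintype.card ι ≤ 3 := by
    have := haff.card_le_finrank_succ
    have h2 := Submodule.finrank_le (vectorSpan ℝ (Set.range z))
    have h3 : Module.finrank ℝ Pt = 2 := by simp [Pt]
    exact this.trans (Nat.succ_le_succ (h2.trans h3.le))
  have e := Fintype.equivFin ι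
  generalize Fintype.card ι = n at hcard e
  have hz' : ∀ i, z (e.symm i) ∈ A \ {x} := fun i => hz ⟨_, rfl⟩
  rw [← e.symm.sum_comp] at hs hsum
  have hinj : ∀ i j, i ≠ j → z (e.symm i) ≠ z (e.symm j) := fun i j hij hh =>
    hij (e.symm.injective (haff.injective hh))
  interval_cases n
  · simp at hs
  · simp at hs hsum
    rw [hs, one_smul] at hsum
    exact absurd hsum (hz' 0).2
  · exfalso
    simp only [Fin.sum_univ_two] at hs hsum
    refine aux_cross_ne hg hx (hz' 0).1 (hz' 1).1 (hz' 0).2 (hz' 1).2 (hinj 0 1 (by simp)) ?_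
    have h1 := congrArg Prod.fst hsum
    have h2 := congrArg Prod.snd hsum
    simp at h1 h2
    have hw1 := hw (e.symm 1)
    simp only [cross2, Prod.fst_sub, Prod.snd_sub]
    have hw0 : w (e.symm 0) = 1 - w (e.symm 1) := by linarith
    rw [hw0] at h1 h2
    rw [← h1, ← h2]; ring
  · simp only [Fin.sum_univ_three] at hs hsum
    have h1 := congrArg Prod.fst hsum
    have h2 := congrArg Prod.snd hsum
    simp at h1 h2
    refine ⟨_, hz' 0, _, hz' 1, _, hz' 2, hinj _ _ (by decide), hinj _ _ (by decide),
      hinj _ _ (by decide), _, _, _, hw (e.symm 0), hw (e.symm 1), hw (e.symm 2), ?_, ?_⟩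
    · linear_combination h1 - x.1 * hs
    · linear_combination h2 - x.2 * hs

lemma aux_interior {A : Set Pt} (x p q r : Pt) (hp : p ∈ A) (hq : q ∈ A) (hr : r ∈ A)
    (k l m : ℝ) (hk : 0 < k) (hl : 0 < l) (hm : 0 < m)
    (hc : cross2 (p - x) (q - x) ≠ 0)
    (h1 : k * (p.1 - x.1) + l * (q.1 - x.1) + m * (r.1 - x.1) = 0)
    (h2 : k * (p.2 - x.2) + l * (q.2 - x.2) + m * (r.2 - x.2) = 0) :
    x ∈ interior (convexHull ℝ A) := by
  simp only [cross2, Prod.fst_sub, Prod.snd_sub] at hc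
  set D := (p.1 - x.1) * (q.2 - x.2) - (p.2 - x.2) * (q.1 - x.1) with hD
  let f : Pt → ℝ := fun y => D * ((p.1 - y.1) * (q.2 - y.2) - (p.2 - y.2) * (q.1 - y.1))
  let g : Pt → ℝ := fun y => D * ((q.1 - y.1) * (r.2 - y.2) - (q.2 - y.2) * (r.1 - y.1))
  let h : Pt → ℝ := fun y => D * ((r.1 - y.1) * (p.2 - y.2) - (r.2 - y.2) * (p.1 - y.1))
  have hf : Continuous f := by fun_prop
  have hg : Continuous g := by fun_prop
  have hh : Continuous h := by fun_prop
  have hDD : 0 < D * D := mul_self_pos.2 hc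
  rw [mem_interior]
  refine ⟨{y | 0 < f y} ∩ {y | 0 < g y} ∩ {y | 0 < h y}, ?_, ?_, ?_⟩
  · rintro y ⟨⟨hy1, hy2⟩, hy3⟩
    simp only [Set.mem_ofPred_eq] at hy1 hy2 hy3
    refine aux_comb A y p q r (g y) (h y) (f y) hy2.le hy3.le hy1.le (by linarith) hp hq hr ?_ ?_
    · simp only [f, g, h]; ring
    · simp only [f, g, h]; ring
  · exact ((isOpen_lt continuous_const hf).inter (isOpen_lt continuous_const hg)).inter
      (isOpen_lt continuous_const hh)
  · have e1 : m * g x = k * (D * D) := by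
      simp only [g]; rw [hD]
      linear_combination (D * (q.1 - x.1)) * h2 - (D * (q.2 - x.2)) * h1
    have e2 : m * h x = l * (D * D) := by
      simp only [h]; rw [hD]
      linear_combination (D * (p.2 - x.2)) * h1 - (D * (p.1 - x.1)) * h2
    refine ⟨⟨?_, ?_⟩, ?_⟩
    · exact hDD
    · exact pos_of_mul_pos_right (b := g x) (a := m) (by rw [e1]; positivity) hm.le
    · exact pos_of_mul_pos_right (b := h x) (a := m) (by rw [e2]; positivity) hm.le

lemma aux_int_mem {A : Finset Pt} {y p : Pt} (hp : p ∈ A) (hpy : p ≠ y)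
    (hy : y ∈ interior (convexHull ℝ (↑A : Set Pt))) :
    y ∈ convexHull ℝ ((↑A : Set Pt) \ {y}) := by
  by_contra hcon
  have hfin : ((↑A : Set Pt) \ {y}).Finite := A.finite_toSet.subset Set.sdiff_subset
  have hcl : IsClosed (convexHull ℝ ((↑A : Set Pt) \ {y})) := hfin.isClosed_convexHull ℝ
  obtain ⟨f, u, hu1, hu2⟩ := geometric_hahn_banach_point_closed (convex_convexHull ℝ _) hcl hcon
  have hlt : ∀ q ∈ A, q ≠ y → f y < f q := fun q hq hqy =>
    hu1.trans (hu2 q (subset_convexHull ℝ _ ⟨hq, hqy⟩))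
  have hsub : convexHull ℝ (↑A : Set Pt) ⊆ {z | f y ≤ f z} := by
    apply convexHull_min
    · intro q hq
      by_cases hqy : q = y
      · simp [hqy]
      · exact (hlt q hq hqy).le
    · exact convex_halfSpace_ge (f.isLinear) _
  have hcont : Filter.Tendsto (fun t : ℝ => y - t • (p - y)) (nhdsWithin 0 (Set.Ioi 0)) (nhds y) := by
    have : Continuous (fun t : ℝ => y - t • (p - y)) := by fun_prop
    have h0 := this.tendsto 0
    simp only [zero_smul, sub_zero] at h0
    exact h0.mono_left nhdsWithin_le_nhds
  have hev := (hcont.eventually (mem_interior_iff_mem_nhds.1 hy)).and self_mem_nhdsWithin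
  obtain ⟨t, ht1, ht2⟩ := hev.exists
  have h1 := hsub ht1
  have h2 := hlt p hp hpy
  simp only [Set.mem_ofPred_eq, map_sub, map_smul, smul_eq_mul] at h1
  have ht : (0 : ℝ) < t := ht2
  nlinarith

lemma aux_perm (x p q r a a' : Pt) (A : Set Pt) (hp : p ∈ A) (hq : q ∈ A) (hr : r ∈ A)
    (hne : a ≠ a') (k l m : ℝ) (hk : 0 < k) (hl : 0 < l) (hm : 0 < m)
    (h1 : k * (p.1 - x.1) + l * (q.1 - x.1) + m * (r.1 - x.1) = 0)
    (h2 : k * (p.2 - x.2) + l * (q.2 - x.2) + m * (r.2 - x.2) = 0)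
    (hpq : p ≠ q) (hpr : p ≠ r) (hqr : q ≠ r)
    (ha : p = a ∨ q = a ∨ r = a) (ha' : p = a' ∨ q = a' ∨ r = a') :
    ∃ s ∈ A, s ≠ a ∧ s ≠ a' ∧ s ∈ ({p, q, r} : Set Pt) ∧ ∃ k l m : ℝ, 0 < k ∧ 0 < l ∧ 0 < m ∧
      k * (a.1 - x.1) + l * (a'.1 - x.1) + m * (s.1 - x.1) = 0 ∧
      k * (a.2 - x.2) + l * (a'.2 - x.2) + m * (s.2 - x.2) = 0 := by
  rcases ha with rfl | rfl | rfl <;> rcases ha' with rfl | rfl | rfl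
  · exact absurd rfl hne
  · exact ⟨r, hr, hpr.symm, hqr.symm, by simp, k, l, m, hk, hl, hm, h1, h2⟩
  · exact ⟨q, hq, hpq.symm, hqr, by simp, k, m, l, hk, hm, hl, by linarith, by linarith⟩
  · exact ⟨r, hr, hqr.symm, hpr.symm, by simp, l, k, m, hl, hk, hm, by linarith, by linarith⟩
  · exact absurd rfl hne
  · exact ⟨p, hp, hpq, hpr, by simp, l, m, k, hl, hm, hk, by linarith, by linarith⟩
  · exact ⟨q, hq, hqr, hpq.symm, by simp, m, k, l, hm, hk, hl, by linarith, by linarith⟩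
  · exact ⟨p, hp, hpr, hpq, by simp, m, l, k, hm, hl, hk, by linarith, by linarith⟩
  · exact absurd rfl hne

lemma aux_wedge {A : Finset Pt} (hg : GenPos (↑A : Set Pt)) {a a' : Pt} (ha : a ∈ A) (ha' : a' ∈ A)
    (hne : a ≠ a') (hca : ConvexPos (↑(A.erase a) : Set Pt))
    (hca' : ConvexPos (↑(A.erase a') : Set Pt))
    {x : Pt} (hx : x ∈ A) (hxa : x ≠ a) (hxa' : x ≠ a')
    (hxc : x ∈ convexHull ℝ ((↑A : Set Pt) \ {x})) :
    ∀ p ∈ A, p ≠ a → p ≠ a' → ∃ α β : ℝ, α ≤ 0 ∧ β ≤ 0 ∧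
          p - x = α • (a - x) + β • (a' - x) := by
  have hA1 : ∀ p q r : Pt, p ∈ A → q ∈ A → r ∈ A → p ≠ x → q ≠ x → r ≠ x → 
      p ≠ a → q ≠ a → r ≠ a → ∀ k l m : ℝ, 0 < k → 0 ≤ l → 0 ≤ m →
      k * (p.1 - x.1) + l * (q.1 - x.1) + m * (r.1 - x.1) = 0 →
      k * (p.2 - x.2) + l * (q.2 - x.2) + m * (r.2 - x.2) = 0 → False := by
    intro p q r hp hq hr hpx hqx hrx hpa hqa hra k l m hk hl hm h1 h2
    refine hca x (by simp [hx, hxa]) (aux_comb _ x p q r k l m hk.le hl hm (by linarith)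
      ?_ ?_ ?_ h1 h2) <;> simp [*]
  have hA2 : ∀ p q r : Pt, p ∈ A → q ∈ A → r ∈ A → p ≠ x → q ≠ x → r ≠ x → 
      p ≠ a' → q ≠ a' → r ≠ a' → ∀ k l m : ℝ, 0 < k → 0 ≤ l → 0 ≤ m →
      k * (p.1 - x.1) + l * (q.1 - x.1) + m * (r.1 - x.1) = 0 →
      k * (p.2 - x.2) + l * (q.2 - x.2) + m * (r.2 - x.2) = 0 → False := by
    intro p q r hp hq hr hpx hqx hrx hpa hqa hra k l m hk hl hm h1 h2
    refine hca' x (by simp [hx, hxa']) (aux_comb _ x p q r k l m hk.le hl hm (by linarith)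
      ?_ ?_ ?_ h1 h2) <;> simp [*]
  obtain ⟨p, hp, q, hq, r, hr, hpq, hpr, hqr, k, l, m, hk, hl, hm, h1, h2⟩ := aux_tri hg hx hxc
  have hma : p = a ∨ q = a ∨ r = a := by
    by_contra! hcon
    exact hA1 p q r hp.1 hq.1 hr.1 hp.2 hq.2 hr.2 hcon.1 hcon.2.1 hcon.2.2 k l m hk hl.le hm.le h1 h2
  have hma' : p = a' ∨ q = a' ∨ r = a' := by
    by_contra! hcon
    exact hA2 p q r hp.1 hq.1 hr.1 hp.2 hq.2 hr.2 hcon.1 hcon.2.1 hcon.2.2 k l m hk hl.le hm.le h1 h2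
  obtain ⟨s, hs, hsa, hsa', -, k, l, m, hk, hl, hm, h1, h2⟩ :=
    aux_perm x p q r a a' _ hp hq hr hne k l m hk hl hm h1 h2 hpq hpr hqr hma hma'
  intro p hp hpa hpa'
  by_cases hpx : p = x
  · exact ⟨0, 0, le_rfl, le_rfl, by simp [hpx]⟩
  have hD := aux_cross_ne hg hx ha ha' hxa.symm hxa'.symm hne
  simp only [cross2, Prod.fst_sub, Prod.snd_sub] at hD
  obtain ⟨α, β, e1, e2⟩ : ∃ α β : ℝ, p.1 - x.1 = α * (a.1 - x.1) + β * (a'.1 - x.1) ∧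
      p.2 - x.2 = α * (a.2 - x.2) + β * (a'.2 - x.2) := by
    refine ⟨((p.1 - x.1) * (a'.2 - x.2) - (p.2 - x.2) * (a'.1 - x.1)) /
      ((a.1 - x.1) * (a'.2 - x.2) - (a.2 - x.2) * (a'.1 - x.1)),
      ((a.1 - x.1) * (p.2 - x.2) - (a.2 - x.2) * (p.1 - x.1)) /
      ((a.1 - x.1) * (a'.2 - x.2) - (a.2 - x.2) * (a'.1 - x.1)), ?_, ?_⟩ <;>
    · rw [div_mul_eq_mul_div, div_mul_eq_mul_div, ← add_div, eq_div_iff hD]; ring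
  -- s - x = -(k/m)(a-x) - (l/m)(a'-x)
  have c1 : 0 < α → α * l - k * β < 0 := by
    intro hα
    by_contra! hcon
    refine hA1 p s a' hp hs.1 ha' hpx hs.2 hxa'.symm hpa hsa hne.symm k (α * m) (α * l - k * β)
      hk (by positivity) hcon ?_ ?_
    · rw [e1]; linear_combination α * h1
    · rw [e2]; linear_combination α * h2
  have c2 : 0 < β → β * k - l * α < 0 := by
    intro hβ
    by_contra! hcon
    refine hA2 p s a hp hs.1 ha hpx hs.2 hxa.symm hpa' hsa' hne l (β * m) (β * k - l * α)
      hl (by positivity) hcon ?_ ?_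
    · rw [e1]; linear_combination β * h1
    · rw [e2]; linear_combination β * h2
  have hα : α ≤ 0 := by
    by_contra! hα
    have t1 := c1 hα
    have hβ : 0 < β := by
      have : 0 < α * l := by positivity
      exact pos_of_mul_pos_right (a := k) (by linarith) hk.le
    have t2 := c2 hβ
    linarith
  have hβ : β ≤ 0 := by
    by_contra! hβ
    have t2 := c2 hβ
    have : 0 < β * k := by positivity
    have : 0 < α := pos_of_mul_pos_right (a := l) (by linarith) hl.le
    linarith
  exact ⟨α, β, hα, hβ, by ext <;> simp [e1, e2]⟩

/-- **Lemma 4(ii).** Let `C = A ∪ B` be an `ℓ`-critical set with exactly two points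
`a, a'` of `A` on the boundary of the convex hull of `C`. Then `A` has exactly one
point `a*` in the interior of the convex hull of `A`, and every point of `A \ {a, a'}`
lies in the convex region spanned by the lines `a*a` and `a*a'` that contains neither
`a` nor `a'` on its boundary (the set of points `a* + α (a - a*) + β (a' - a*)` with
`α, β ≤ 0`). -/
theorem critical_two_extremal_structure
    (v : Pt) (hv : v ≠ 0) (c : ℝ) (A B : Finset Pt)
    (hA : ∀ p ∈ A, dotp v p < c) (hB : ∀ p ∈ B, c < dotp v p)
    (hAne : A.Nonempty) (hBne : B.Nonempty)
    (hgen : GenPos (↑(A ∪ B) : Set Pt))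
    (hcrit : LCritical A B)
    (a a' : Pt) (ha : a ∈ A) (ha' : a' ∈ A) (hne : a ≠ a')
    (hbd : {p : Pt | p ∈ A ∧ OnHullBoundary (A ∪ B) p} = {a, a'}) :
    ∃ aStar : Pt, aStar ∈ A ∧ aStar ∈ interior (convexHull ℝ (↑A : Set Pt)) ∧
      (∀ p ∈ A, p ∈ interior (convexHull ℝ (↑A : Set Pt)) → p = aStar) ∧
      ∀ p ∈ A, p ≠ a → p ≠ a' →
        ∃ α β : ℝ, α ≤ 0 ∧ β ≤ 0 ∧
          p - aStar = α • (a - aStar) + β • (a' - aStar) := by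
  obtain ⟨hnA, hnB, hex⟩ := hcrit
  have hgA : GenPos (↑A : Set Pt) := fun p hp q hq r hr =>
    hgen p (by simp_all) q (by simp_all) r (by simp_all)
  have hbA : ∀ p ∈ A, p ∉ B := fun p hp hpB => by
    have := hA p hp
    have := hB p hpB
    linarith
  have hfa : OnHullBoundary (A ∪ B) a := by
    have : a ∈ {p : Pt | p ∈ A ∧ OnHullBoundary (A ∪ B) p} := by rw [hbd]; simp
    exact this.2
  have hfa' : OnHullBoundary (A ∪ B) a' := by
    have : a' ∈ {p : Pt | p ∈ A ∧ OnHullBoundary (A ∪ B) p} := by rw [hbd]; simp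
    exact this.2
  have hca : ConvexPos (↑(A.erase a) : Set Pt) := by
    rcases hex a (by simp [ha]) hfa with h | h
    · exact h
    · rw [Finset.erase_eq_of_notMem (hbA a ha)] at h
      exact absurd h hnB
  have hca' : ConvexPos (↑(A.erase a') : Set Pt) := by
    rcases hex a' (by simp [ha']) hfa' with h | h
    · exact h
    · rw [Finset.erase_eq_of_notMem (hbA a' ha')] at h
      exact absurd h hnB
  have hsub : interior (convexHull ℝ (↑A : Set Pt)) ⊆
      interior (convexHull ℝ (↑(A ∪ B) : Set Pt)) :=
    interior_mono (convexHull_mono (by simp))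
  have hnea : ∀ y ∈ interior (convexHull ℝ (↑A : Set Pt)), y ≠ a := by
    rintro y hy rfl
    exact hfa.2 (hsub hy)
  have hnea' : ∀ y ∈ interior (convexHull ℝ (↑A : Set Pt)), y ≠ a' := by
    rintro y hy rfl
    exact hfa'.2 (hsub hy)
  unfold ConvexPos at hnA
  push Not at hnA
  obtain ⟨x, hx, hxc⟩ := hnA
  have hxi : x ∈ interior (convexHull ℝ (↑A : Set Pt)) := by
    obtain ⟨p, hp, q, hq, r, hr, hpq, -, -, k, l, m, hk, hl, hm, h1, h2⟩ := aux_tri hgA hx hxc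
    exact aux_interior x p q r hp.1 hq.1 hr.1 k l m hk hl hm
      (aux_cross_ne hgA hx hp.1 hq.1 hp.2 hq.2 hpq) h1 h2
  have hxa := hnea x hxi
  have hxa' := hnea' x hxi
  have hW := aux_wedge hgA ha ha' hne hca hca' hx hxa hxa' hxc
  refine ⟨x, hx, hxi, ?_, hW⟩
  intro y hy hyi
  have hya := hnea y hyi
  have hya' := hnea' y hyi
  have hyc := aux_int_mem ha hya.symm hyi
  obtain ⟨α, β, hα, hβ, e⟩ := hW y hy hya hya'
  obtain ⟨α', β', hα', hβ', e'⟩ :=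
    aux_wedge hgA ha ha' hne hca hca' hy hya hya' hyc x hx hxa hxa'
  have hD := aux_cross_ne hgA hx ha ha' hxa.symm hxa'.symm hne
  simp only [cross2, Prod.fst_sub, Prod.snd_sub] at hD
  have e1 := congrArg Prod.fst e
  have e2 := congrArg Prod.snd e
  have e1' := congrArg Prod.fst e'
  have e2' := congrArg Prod.snd e'
  simp at e1 e2 e1' e2'
  have y1 : y.1 = x.1 + (α * (a.1 - x.1) + β * (a'.1 - x.1)) := by linarith
  have y2 : y.2 = x.2 + (α * (a.2 - x.2) + β * (a'.2 - x.2)) := by linarith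
  rw [y1] at e1'
  rw [y2] at e2'
  have q1 : (α' + β' - 1) * α - α' = 0 := by
    apply (mul_eq_zero.1 _).resolve_right hD
    linear_combination (a'.2 - x.2) * e1' - (a'.1 - x.1) * e2'
  have q2 : (α' + β' - 1) * β - β' = 0 := by
    apply (mul_eq_zero.1 _).resolve_right hD
    linear_combination (a.1 - x.1) * e2' - (a.2 - x.2) * e1'
  have hα0 : α = 0 := by nlinarith
  have hβ0 : β = 0 := by nlinarith
  rw [hα0, hβ0] at e
  simpa [sub_eq_zero] using e


end
end
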